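/- arXiv:1609.08575 — 9 statements merged into one kernel-verified Lean document; each statement's English description precedes it below -/
import Mathlib

section
/- Let I ⊆ ℝ be an open interval, let α, β ∈ ℝ, and let w : ℝ → ℝ be three times differentiable on I, satisfy 2·w(t)·w''(t) = (w'(t))² + 3·w(t)⁴ + 8·t·w(t)³ + 4·(t² − α)·w(t)² − β² for all t ∈ I, and suppose every zero of w in I is an isolated zero. Then for all t ∈ I, w'''(t) = (6·w(t)² + 12·t·w(t) + 4·(t² − α))·w'(t) + 4·(w(t) + t)·w(t). -/
/-!
Differentiating (PIV) gives `w * w''' = w * R`, where `R` is the right-hand side of (PIV'), so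
(PIV') holds wherever `w` does not vanish. If `w` has no zeros near `a` other than possibly `a`,
then `w'''` agrees with the continuous function `R` near `a` except possibly at `a`; since a
derivative has no removable discontinuity, they also agree at `a`. If instead the zeros of `w`
accumulate at `a`, then by Rolle's theorem so do those of `w'` and `w''`; hence `w`, `w'` and `w'''`
vanish at `a`, and both sides of (PIV') are zero there.
-/

open Filter Set
open scoped Topology

section Field

variable {𝕜 : Type*} [NontriviallyNormedField 𝕜]

/-- The rearranged fourth Painlevé equation (PIV) with parameters `α`, `β` for `w` at the point `t`.
Derivatives are expressed by `deriv`, so differentiability has to be assumed separately. -/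
def PIVAt (α β : 𝕜) (w : 𝕜 → 𝕜) (t : 𝕜) : Prop :=
  2 * w t * deriv (deriv w) t =
    (deriv w t) ^ 2 + 3 * w t ^ 4 + 8 * t * w t ^ 3 + 4 * (t ^ 2 - α) * w t ^ 2 - β ^ 2

/-- The right-hand side of the third-order equation (PIV'), which expresses `w'''` through `w` and
`w'`. -/
noncomputable def pivPrimeRHS (α : 𝕜) (w : 𝕜 → 𝕜) (t : 𝕜) : 𝕜 :=
  (6 * w t ^ 2 + 12 * t * w t + 4 * (t ^ 2 - α)) * deriv w t + 4 * (w t + t) * w t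

theorem continuousAt_pivPrimeRHS {α : 𝕜} {w : 𝕜 → 𝕜} {t : 𝕜} (hw : ContinuousAt w t)
    (hw' : ContinuousAt (deriv w) t) : ContinuousAt (pivPrimeRHS α w) t := by
  unfold pivPrimeRHS
  fun_prop

theorem pivPrimeRHS_eq_zero {α : 𝕜} {w : 𝕜 → 𝕜} {t : 𝕜} (hw : w t = 0) (hw' : deriv w t = 0) :
    pivPrimeRHS α w t = 0 := by
  simp [pivPrimeRHS, hw, hw']

theorem mul_deriv_deriv_deriv_eq_mul_pivPrimeRHS [NeZero (2 : 𝕜)] {α β : 𝕜} {w : 𝕜 → 𝕜} {t : 𝕜}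
    (hd1 : DifferentiableAt 𝕜 w t) (hd2 : DifferentiableAt 𝕜 (deriv w) t)
    (hd3 : DifferentiableAt 𝕜 (deriv (deriv w)) t) (heq : ∀ᶠ s in 𝓝 t, PIVAt α β w s) :
    w t * deriv (deriv (deriv w)) t = w t * pivPrimeRHS α w t := by
  have h1 := hd1.hasDerivAt
  have h2 := hd2.hasDerivAt
  have hid := hasDerivAt_id' t
  have hlhs : HasDerivAt (fun s => 2 * w s * deriv (deriv w) s)
      (2 * deriv w t * deriv (deriv w) t + 2 * w t * deriv (deriv (deriv w)) t) t :=
    (h1.const_mul 2).mul hd3.hasDerivAt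
  have hrhs : HasDerivAt (fun s => (deriv w s) ^ 2 + 3 * w s ^ 4 + 8 * s * w s ^ 3 +
        4 * (s ^ 2 - α) * w s ^ 2 - β ^ 2)
      (2 * deriv w t * deriv (deriv w) t + 2 * (w t * pivPrimeRHS α w t)) t := by
    refine HasDerivAt.congr_deriv (((((h2.pow 2).add ((h1.pow 4).const_mul 3)).add
      ((hid.const_mul 8).mul (h1.pow 3))).add
      ((((hid.pow 2).sub_const α).const_mul 4).mul (h1.pow 2))).sub_const (β ^ 2)) ?_
    simp only [pivPrimeRHS, Pi.pow_apply]
    push_cast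
    ring
  apply mul_left_cancel₀ (two_ne_zero : (2 : 𝕜) ≠ 0)
  linear_combination hlhs.unique (hrhs.congr_of_eventuallyEq heq)

end Field

theorem deriv_eq_of_tendsto_deriv_nhdsGT {E : Type*} [NormedAddCommGroup E] [NormedSpace ℝ E]
    {f : ℝ → E} {a : ℝ} {e : E} (ha : DifferentiableAt ℝ f a)
    (hf : ∀ᶠ t in 𝓝[>] a, DifferentiableAt ℝ f t) (hlim : Tendsto (deriv f) (𝓝[>] a) (𝓝 e)) :
    deriv f a = e := by
  have hright : HasDerivWithinAt f e (Ici a) a :=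
    hasDerivWithinAt_Ici_of_tendsto_deriv (s := {t | DifferentiableAt ℝ f t})
      (fun _ ht => ht.differentiableWithinAt) ha.continuousAt.continuousWithinAt hf hlim
  exact (uniqueDiffWithinAt_Ici a).eq_deriv _ ha.hasDerivAt.hasDerivWithinAt hright

theorem exists_mem_uIoo_deriv_eq_zero {f : ℝ → ℝ} {a b : ℝ} (hab : a ≠ b)
    (hf : ContinuousOn f (uIcc a b)) (hfab : f a = f b) : ∃ c ∈ uIoo a b, deriv f c = 0 := by
  rcases hab.lt_or_gt with h | h
  · rw [uIcc_of_lt h] at hf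
    rw [uIoo_of_lt h]
    exact exists_deriv_eq_zero h hf hfab
  · rw [uIcc_of_gt h] at hf
    rw [uIoo_of_gt h]
    exact exists_deriv_eq_zero h hf hfab.symm

theorem frequently_deriv_eq_zero_of_frequently_eq {f : ℝ → ℝ} {a : ℝ}
    (hf : ∀ᶠ t in 𝓝 a, ContinuousAt f t) (hfreq : ∃ᶠ t in 𝓝[≠] a, f t = f a) :
    ∃ᶠ t in 𝓝[≠] a, deriv f t = 0 := by
  rw [Metric.nhdsWithin_basis_ball.frequently_iff] at hfreq ⊢
  obtain ⟨ε, hε, hcont⟩ := Metric.eventually_nhds_iff_ball.1 hf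
  intro δ hδ
  have hr : 0 < min δ ε := lt_min hδ hε
  obtain ⟨t, ⟨ht, hne⟩, hta⟩ := hfreq _ hr
  have hsub : uIcc a t ⊆ Metric.ball a (min δ ε) :=
    (convex_ball a _).ordConnected.uIcc_subset (Metric.mem_ball_self hr) ht
  have hcont_uIcc : ContinuousOn f (uIcc a t) := fun s hs =>
    (hcont s (Metric.ball_subset_ball (min_le_right δ ε) (hsub hs))).continuousWithinAt
  obtain ⟨s, hs, hs0⟩ := exists_mem_uIoo_deriv_eq_zero (Ne.symm hne) hcont_uIcc hta.symm
  have hsa : s ≠ a := by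
    rintro rfl
    exact left_notMem_uIoo hs
  exact ⟨s, ⟨Metric.ball_subset_ball (min_le_left δ ε) (hsub (uIoo_subset_uIcc_self hs)), hsa⟩, hs0⟩

section Real

variable {α β a : ℝ} {w : ℝ → ℝ}

theorem deriv_deriv_deriv_eq_pivPrimeRHS_of_eventually_ne
    (hd1 : ∀ᶠ t in 𝓝 a, DifferentiableAt ℝ w t) (hd2 : ∀ᶠ t in 𝓝 a, DifferentiableAt ℝ (deriv w) t)
    (hd3 : ∀ᶠ t in 𝓝 a, DifferentiableAt ℝ (deriv (deriv w)) t)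
    (heq : ∀ᶠ t in 𝓝 a, PIVAt α β w t) (hne : ∀ᶠ t in 𝓝[≠] a, w t ≠ 0) :
    deriv (deriv (deriv w)) a = pivPrimeRHS α w a := by
  have hagree : ∀ᶠ t in 𝓝[≠] a, pivPrimeRHS α w t = deriv (deriv (deriv w)) t := by
    filter_upwards [hne, hd1.filter_mono nhdsWithin_le_nhds, hd2.filter_mono nhdsWithin_le_nhds,
      hd3.filter_mono nhdsWithin_le_nhds, heq.eventually_nhds.filter_mono nhdsWithin_le_nhds]
      with t hwt h1 h2 h3 ht
    exact (mul_left_cancel₀ hwt (mul_deriv_deriv_deriv_eq_mul_pivPrimeRHS h1 h2 h3 ht)).symm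
  have hlim : Tendsto (deriv (deriv (deriv w))) (𝓝[≠] a) (𝓝 (pivPrimeRHS α w a)) :=
    ((continuousAt_pivPrimeRHS hd1.self_of_nhds.continuousAt
      hd2.self_of_nhds.continuousAt).tendsto.mono_left nhdsWithin_le_nhds).congr' hagree
  exact deriv_eq_of_tendsto_deriv_nhdsGT hd3.self_of_nhds
    (hd3.filter_mono nhdsWithin_le_nhds) (hlim.mono_left (nhdsGT_le_nhdsNE a))

theorem deriv_deriv_deriv_eq_pivPrimeRHS_of_frequently_eq_zero
    (hcont : ∀ᶠ t in 𝓝 a, ContinuousAt w t) (hcont' : ∀ᶠ t in 𝓝 a, ContinuousAt (deriv w) t)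
    (hzero : ∃ᶠ t in 𝓝[≠] a, w t = 0) :
    deriv (deriv (deriv w)) a = pivPrimeRHS α w a := by
  have hw : w a = 0 := isClosed_singleton.mem_of_frequently_of_tendsto hzero
    (hcont.self_of_nhds.tendsto.mono_left nhdsWithin_le_nhds)
  have hw' : deriv w a = 0 := deriv_zero_of_frequently_const hzero
  have hzero' : ∃ᶠ t in 𝓝[≠] a, deriv w t = 0 :=
    frequently_deriv_eq_zero_of_frequently_eq hcont (by rwa [hw])
  have hzero'' : ∃ᶠ t in 𝓝[≠] a, deriv (deriv w) t = 0 :=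
    frequently_deriv_eq_zero_of_frequently_eq hcont' (by rwa [hw'])
  rw [deriv_zero_of_frequently_const hzero'', pivPrimeRHS_eq_zero hw hw']

end Real

theorem real_piv_implies_piv'_general {I : Set ℝ} (hopen : IsOpen I) {α β : ℝ} {w : ℝ → ℝ}
    (hd1 : ∀ t ∈ I, DifferentiableAt ℝ w t)
    (hd2 : ∀ t ∈ I, DifferentiableAt ℝ (deriv w) t)
    (hd3 : ∀ t ∈ I, DifferentiableAt ℝ (deriv (deriv w)) t)
    (heq : ∀ t ∈ I, PIVAt α β w t) :
    ∀ t ∈ I, deriv (deriv (deriv w)) t = pivPrimeRHS α w t := by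
  intro a ha
  have near {p : ℝ → Prop} (h : ∀ t ∈ I, p t) : ∀ᶠ t in 𝓝 a, p t :=
    eventually_of_mem (hopen.mem_nhds ha) h
  by_cases hzero : ∃ᶠ t in 𝓝[≠] a, w t = 0
  · exact deriv_deriv_deriv_eq_pivPrimeRHS_of_frequently_eq_zero
      (near fun t ht => (hd1 t ht).continuousAt) (near fun t ht => (hd2 t ht).continuousAt) hzero
  · exact deriv_deriv_deriv_eq_pivPrimeRHS_of_eventually_ne (near hd1) (near hd2) (near hd3)
      (near heq) (not_frequently.1 hzero)

/-- If `w` is three times differentiable on an open interval `I ⊆ ℝ`, satisfies the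
rearranged fourth Painlevé equation (PIV) with parameters `α, β` on `I`, and every
zero of `w` in `I` is isolated, then `w` satisfies the third-order equation (PIV')
throughout `I`. -/
theorem real_piv_implies_piv' (I : Set ℝ) (hopen : IsOpen I) (hint : I.OrdConnected)
    (α β : ℝ) (w : ℝ → ℝ)
    (hd1 : ∀ t ∈ I, DifferentiableAt ℝ w t)
    (hd2 : ∀ t ∈ I, DifferentiableAt ℝ (deriv w) t)
    (hd3 : ∀ t ∈ I, DifferentiableAt ℝ (deriv (deriv w)) t)
    (heq : ∀ t ∈ I, 2 * w t * deriv (deriv w) t =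
      (deriv w t) ^ 2 + 3 * w t ^ 4 + 8 * t * w t ^ 3 + 4 * (t ^ 2 - α) * w t ^ 2 - β ^ 2)
    (hiso : ∀ a ∈ I, w a = 0 → ∃ δ > 0, ∀ t ∈ I, 0 < |t - a| → |t - a| < δ → w t ≠ 0) :
    ∀ t ∈ I, deriv (deriv (deriv w)) t =
      (6 * w t ^ 2 + 12 * t * w t + 4 * (t ^ 2 - α)) * deriv w t + 4 * (w t + t) * w t :=
  real_piv_implies_piv'_general hopen hd1 hd2 hd3 heq
end

section
/- Let I ⊆ ℝ be an open interval, let α ∈ ℝ, and let w : ℝ → ℝ be three times differentiable on I and satisfy the rearranged fourth Painlevé equation with β = 0, namely 2·w(t)·w''(t) = (w'(t))² + 3·w(t)⁴ + 8·t·w(t)³ + 4·(t² − α)·w(t)² for all t ∈ I. If a ∈ I satisfies w(a) = 0 and a is an isolated zero of w (i.e., there is δ > 0 such that w(t) ≠ 0 for all t ∈ I with 0 < |t − a| < δ), then w''(a) ≠ 0. -/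
/-!
On an interval where `w ≠ 0`, write `w = ± u ^ 2`. The equation
`2 * w * w'' = w' ^ 2 + g * w ^ 2`, of which the fourth Painlevé equation with `β = 0` is the case
`g = 3 * w ^ 2 + 8 * t * w + 4 * (t ^ 2 - α)`, becomes the linear equation `u'' = (g / 4) * u`, so
`E = u ^ 2 + 4 * u' ^ 2 = ± (w + w' ^ 2 / w)` satisfies `|E'| ≤ K * |E|`. Since
`w' ^ 2 / w = 2 * w'' - g * w`, if `w''` vanished at a zero `a` of `w`, then `E` would have the
cluster value `0` at `a`, and Grönwall's inequality would force `E = 0`, hence `w = 0`, near `a`.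
-/

open Filter Set Topology

theorem mapClusterPt_deriv_nhdsGT {f : ℝ → ℝ} {a f' : ℝ} (ha : HasDerivWithinAt f f' (Ioi a) a)
    (hf : ∀ᶠ t in 𝓝[>] a, DifferentiableAt ℝ f t) :
    MapClusterPt f' (𝓝[>] a) (deriv f) := by
  refine mapClusterPt_iff_frequently.2 fun s hs => frequently_iff.2 fun {U} hU => ?_
  obtain ⟨b, hab, hb⟩ := mem_nhdsGT_iff_exists_Ioo_subset.1 (inter_mem hU hf)
  have hslope : ∀ᶠ t in 𝓝[>] a, slope f a t ∈ s :=
    (hasDerivWithinAt_iff_tendsto_slope' self_notMem_Ioi).1 ha hs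
  obtain ⟨t, hts, hat, htb⟩ := (hslope.and (Ioo_mem_nhdsGT hab)).exists
  have hcont : ContinuousOn f (Icc a t) := by
    rintro x ⟨hax, hxt⟩
    rcases hax.eq_or_lt with rfl | hax
    · exact (continuousWithinAt_Ioi_iff_Ici.1 ha.continuousWithinAt).mono Icc_subset_Ici_self
    · exact (hb ⟨hax, hxt.trans_lt htb⟩).2.continuousAt.continuousWithinAt
  obtain ⟨c, ⟨hac, hct⟩, hc⟩ := exists_deriv_eq_slope' f hat hcont fun x hx =>
    (hb ⟨hx.1, hx.2.trans htb⟩).2.differentiableWithinAt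
  exact ⟨c, (hb ⟨hac, hct.trans htb⟩).1, hc ▸ hts⟩

theorem eventually_nhdsGT_of_forall_abs_sub_lt {I : Set ℝ} {a : ℝ} {p : ℝ → Prop} (hI : I ∈ 𝓝[>] a)
    (hp : ∃ δ > 0, ∀ t ∈ I, 0 < |t - a| ∧ |t - a| < δ → p t) : ∀ᶠ t in 𝓝[>] a, p t := by
  obtain ⟨δ, hδ, hp⟩ := hp
  filter_upwards [hI, Ioo_mem_nhdsGT (lt_add_of_pos_right a hδ)] with t ht ⟨hat, htδ⟩
  refine hp t ht ?_
  rw [abs_of_pos (sub_pos.2 hat)]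
  exact ⟨sub_pos.2 hat, sub_lt_iff_lt_add'.2 htδ⟩

theorem eventually_eq_zero_of_norm_deriv_le_mul_norm {F : Type*} [NormedAddCommGroup F]
    [NormedSpace ℝ F] {f f' : ℝ → F} {a K : ℝ} (hf : ∀ᶠ t in 𝓝[>] a, HasDerivAt f (f' t) t)
    (hle : ∀ᶠ t in 𝓝[>] a, ‖f' t‖ ≤ K * ‖f t‖) (h0 : MapClusterPt 0 (𝓝[>] a) f) :
    ∀ᶠ t in 𝓝[>] a, f t = 0 := by
  obtain ⟨b, hab, hb⟩ := mem_nhdsGT_iff_exists_Ioo_subset.1 (hf.and hle)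
  filter_upwards [Ioo_mem_nhdsGT hab] with t ⟨hat, htb⟩
  have hgronwall : ∀ s ∈ Ioo a t, ‖f t‖ ≤ ‖f s‖ * Real.exp (|K| * (t - a)) := by
    rintro s ⟨has, hst⟩
    have hbound := norm_le_gronwallBound_of_norm_deriv_right_le (f := f) (ε := 0)
      (fun x hx => (hb ⟨has.trans_le hx.1, hx.2.trans_lt htb⟩).1.continuousAt.continuousWithinAt)
      (fun x hx => (hb ⟨has.trans_le hx.1, hx.2.trans htb⟩).1.hasDerivWithinAt) le_rfl
      (fun x hx => by simpa using (hb ⟨has.trans_le hx.1, hx.2.trans htb⟩).2)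
      t (right_mem_Icc.2 hst.le)
    rw [gronwallBound_ε0] at hbound
    have hexponent : K * (t - s) ≤ |K| * (t - a) :=
      mul_le_mul (le_abs_self K) (by linarith) (by linarith) (abs_nonneg K)
    exact hbound.trans (by gcongr)
  have hclosed : IsClosed {x : F | ‖f t‖ ≤ ‖x‖ * Real.exp (|K| * (t - a))} :=
    isClosed_le continuous_const (by fun_prop)
  have hzero : ‖f t‖ ≤ ‖(0 : F)‖ * Real.exp (|K| * (t - a)) :=
    hclosed.mem_of_mapClusterPt h0 (mem_of_superset (Ioo_mem_nhdsGT hat) hgronwall)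
  simpa using hzero

/-- The function `w + w' ^ 2 / w`, which is `u ^ 2 + 4 * u' ^ 2` when `w = u ^ 2` and its negative
when `w = - u ^ 2`. It is meaningful only where `w ≠ 0`; at zeros of `w` it takes the junk
value `0`. -/
noncomputable def sqrtEnergy (w : ℝ → ℝ) (t : ℝ) : ℝ :=
  w t + deriv w t ^ 2 / w t

section SqrtEnergy

variable {w g : ℝ → ℝ} {a t : ℝ}

theorem sqrtEnergy_ne_zero (hw : w t ≠ 0) : sqrtEnergy w t ≠ 0 := by
  have hsum : 0 < w t ^ 2 + deriv w t ^ 2 := by positivity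
  have hquot : sqrtEnergy w t = (w t ^ 2 + deriv w t ^ 2) / w t := by
    rw [sqrtEnergy]
    field_simp
  exact hquot ▸ div_ne_zero hsum.ne' hw

theorem abs_deriv_le_abs_sqrtEnergy (hw : w t ≠ 0) : |deriv w t| ≤ |sqrtEnergy w t| := by
  have hprod : w t * (deriv w t ^ 2 / w t) = deriv w t ^ 2 := by field_simp
  refine sq_le_sq.1 ?_
  rw [sqrtEnergy]
  nlinarith [sq_nonneg (w t), sq_nonneg (deriv w t ^ 2 / w t), sq_nonneg (deriv w t)]

theorem sqrtEnergy_eq_two_mul_deriv_deriv_add (hw : w t ≠ 0)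
    (heq : 2 * w t * deriv (deriv w) t = deriv w t ^ 2 + g t * w t ^ 2) :
    sqrtEnergy w t = 2 * deriv (deriv w) t + (w t - w t * g t) := by
  rw [sqrtEnergy]
  field_simp
  linear_combination -heq

theorem hasDerivAt_sqrtEnergy (hw : w t ≠ 0) (hd1 : DifferentiableAt ℝ w t)
    (hd2 : DifferentiableAt ℝ (deriv w) t)
    (heq : 2 * w t * deriv (deriv w) t = deriv w t ^ 2 + g t * w t ^ 2) :
    HasDerivAt (sqrtEnergy w) ((1 + g t) * deriv w t) t := by
  refine (hd1.hasDerivAt.add ((hd2.hasDerivAt.fun_pow 2).fun_div hd1.hasDerivAt hw)).congr_deriv ?_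
  field_simp
  linear_combination deriv w t * heq

theorem mapClusterPt_sqrtEnergy (hcont : ContinuousWithinAt w (Ioi a) a)
    (hd2 : ∀ᶠ t in 𝓝[≥] a, DifferentiableAt ℝ (deriv w) t)
    (heq : ∀ᶠ t in 𝓝[>] a, 2 * w t * deriv (deriv w) t = deriv w t ^ 2 + g t * w t ^ 2)
    (hg : IsBoundedUnder (· ≤ ·) (𝓝[>] a) (‖g ·‖)) (ha : w a = 0)
    (hne : ∀ᶠ t in 𝓝[>] a, w t ≠ 0) :
    MapClusterPt (2 * deriv (deriv w) a) (𝓝[>] a) (sqrtEnergy w) := by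
  have hcluster : MapClusterPt (deriv (deriv w) a) (𝓝[>] a) (deriv (deriv w)) :=
    mapClusterPt_deriv_nhdsGT (hd2.self_of_nhdsWithin self_mem_Ici).hasDerivAt.hasDerivWithinAt
      (hd2.filter_mono (nhdsWithin_mono a Ioi_subset_Ici_self))
  obtain ⟨U, hU, hlim⟩ := mapClusterPt_iff_ultrafilter.1 hcluster
  have hw : Tendsto w (𝓝[>] a) (𝓝 0) := ha ▸ hcont.tendsto
  have hrest : Tendsto (fun t => w t - w t * g t) (𝓝[>] a) (𝓝 0) := by
    simpa using hw.sub (hw.zero_mul_isBoundedUnder_le hg)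
  have hsum : Tendsto (fun t => 2 * deriv (deriv w) t + (w t - w t * g t)) U
      (𝓝 (2 * deriv (deriv w) a)) := by
    simpa using (hlim.const_mul 2).add (hrest.mono_left hU)
  have hE : ∀ᶠ t in 𝓝[>] a, 2 * deriv (deriv w) t + (w t - w t * g t) = sqrtEnergy w t := by
    filter_upwards [hne, heq] with t hwt heqt
    exact (sqrtEnergy_eq_two_mul_deriv_deriv_add hwt heqt).symm
  exact (hsum.congr' (hE.filter_mono hU)).mapClusterPt.mono hU

theorem second_deriv_ne_zero_at_isolated_zero_general
    (hd1 : ∀ᶠ t in 𝓝[≥] a, DifferentiableAt ℝ w t)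
    (hd2 : ∀ᶠ t in 𝓝[≥] a, DifferentiableAt ℝ (deriv w) t)
    (heq : ∀ᶠ t in 𝓝[>] a, 2 * w t * deriv (deriv w) t = deriv w t ^ 2 + g t * w t ^ 2)
    (hg : IsBoundedUnder (· ≤ ·) (𝓝[>] a) (‖g ·‖)) (ha : w a = 0)
    (hne : ∀ᶠ t in 𝓝[>] a, w t ≠ 0) :
    deriv (deriv w) a ≠ 0 := by
  intro hw2
  have hright : 𝓝[>] a ≤ 𝓝[≥] a := nhdsWithin_mono a Ioi_subset_Ici_self
  have hcluster : MapClusterPt 0 (𝓝[>] a) (sqrtEnergy w) := by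
    have hcont : ContinuousAt w a := (hd1.self_of_nhdsWithin self_mem_Ici).continuousAt
    simpa [hw2] using mapClusterPt_sqrtEnergy hcont.continuousWithinAt hd2 heq hg ha hne
  have hderiv : ∀ᶠ t in 𝓝[>] a, HasDerivAt (sqrtEnergy w) ((1 + g t) * deriv w t) t := by
    filter_upwards [hne, hright hd1, hright hd2, heq] with t using hasDerivAt_sqrtEnergy
  obtain ⟨C, hC⟩ := hg
  have hle : ∀ᶠ t in 𝓝[>] a, ‖(1 + g t) * deriv w t‖ ≤ (1 + C) * ‖sqrtEnergy w t‖ := by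
    filter_upwards [hne, eventually_map.1 hC] with t hwt hCt
    have hcoeff : ‖1 + g t‖ ≤ 1 + C := (norm_add_le _ _).trans (by simpa using hCt)
    exact norm_mul_le_of_le hcoeff (abs_deriv_le_abs_sqrtEnergy hwt)
  obtain ⟨t, hEt, hwt⟩ :=
    ((eventually_eq_zero_of_norm_deriv_le_mul_norm hderiv hle hcluster).and hne).exists
  exact sqrtEnergy_ne_zero hwt hEt

end SqrtEnergy

/-- If `w` is three times differentiable on an open interval `I ⊆ ℝ` and satisfies the
rearranged fourth Painlevé equation with `β = 0` on `I`, then at any isolated zero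
`a ∈ I` of `w` the second derivative `w''(a)` is nonzero. -/
theorem second_deriv_ne_zero_at_isolated_zero (I : Set ℝ) (hopen : IsOpen I)
    (hint : I.OrdConnected) (α : ℝ) (w : ℝ → ℝ)
    (hd1 : ∀ t ∈ I, DifferentiableAt ℝ w t)
    (hd2 : ∀ t ∈ I, DifferentiableAt ℝ (deriv w) t)
    (hd3 : ∀ t ∈ I, DifferentiableAt ℝ (deriv (deriv w)) t)
    (heq : ∀ t ∈ I, 2 * w t * deriv (deriv w) t =
      (deriv w t) ^ 2 + 3 * w t ^ 4 + 8 * t * w t ^ 3 + 4 * (t ^ 2 - α) * w t ^ 2)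
    (a : ℝ) (ha : a ∈ I) (hza : w a = 0)
    (hiso : ∃ δ > 0, ∀ t ∈ I, 0 < |t - a| ∧ |t - a| < δ → w t ≠ 0) :
    deriv (deriv w) a ≠ 0 := by
  have hI : ∀ {s}, I ∈ 𝓝[s] a := mem_nhdsWithin_of_mem_nhds (hopen.mem_nhds ha)
  have hcoeff : ContinuousAt (fun t => 3 * w t ^ 2 + 8 * t * w t + 4 * (t ^ 2 - α)) a := by
    have hw := (hd1 a ha).continuousAt
    fun_prop
  exact second_deriv_ne_zero_at_isolated_zero_general
    (eventually_of_mem hI hd1) (eventually_of_mem hI hd2)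
    (eventually_of_mem hI fun t ht => (heq t ht).trans (by ring))
    hcoeff.continuousWithinAt.tendsto.norm.isBoundedUnder_le hza
    (eventually_nhdsGT_of_forall_abs_sub_lt hI hiso)
end

section
/- Let I ⊆ ℝ be an open interval, let a ∈ I, and let w : ℝ → ℝ be three times differentiable on I, satisfy the rearranged equation PIV₀, namely 2·w(t)·w''(t) = (w'(t))² + 3·w(t)⁴ + 8·t·w(t)³ + 4·t²·w(t)² for all t ∈ I, with w(a) = 0 and w(t) > 0 for all t ∈ I with t ≠ a. Define f : I → ℝ by f(t) = −√(w(t)) for t ≤ a and f(t) = +√(w(t)) for t ≥ a. Then f is twice differentiable on I and satisfies 4·f''(t) = f(t)·(3·f(t)² + 2·t)·(f(t)² + 2·t) for all t ∈ I. -/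
/-!
Away from `a`, substituting `w = f²` gives `2 w w'' - (w')² = 4 f³ f''`, so the equation
`2 w w'' = (w')² + q w²` becomes the linear equation `4 f'' = q f`; PIV₀ is the case
`q = 3 w² + 8 t w + 4 t² = (3 f² + 2 t) (f² + 2 t)`.

At `a` both `w` and `w'` vanish, so `w t / (t - a)² → w''(a) / 2`. Because `f` changes sign together
with `t - a`, its difference quotient at `a` is the nonnegative square root of `w t / (t - a)²`, and
hence `f'(a) = √(w''(a) / 2)`. Since `f'' = q f / 4` is bounded near `a`, the mean value theorem,
applied to `f` and then to `f'` on an interval avoiding `a`, bounds the distance from `f' t` to the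
difference quotient of `f` by `C |t - a|`. So `f'` is continuous at `a`, and `f'' → 0` there yields
`f''(a) = 0`.
-/

open Asymptotics Filter Set Topology

theorem exists_mem_uIoo_deriv_eq_slope {f : ℝ → ℝ} {a b : ℝ} (hab : a ≠ b)
    (hf : ∀ x ∈ uIcc a b, DifferentiableAt ℝ f x) : ∃ c ∈ uIoo a b, deriv f c = slope f a b := by
  have hcont : ContinuousOn f (uIcc a b) := fun x hx => (hf x hx).continuousAt.continuousWithinAt
  have hdiff : DifferentiableOn ℝ f (uIoo a b) := fun x hx =>
    (hf x (uIoo_subset_uIcc_self hx)).differentiableWithinAt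
  rcases hab.lt_or_gt with h | h
  · rw [uIcc_of_lt h] at hcont
    rw [uIoo_of_lt h] at hdiff ⊢
    exact exists_deriv_eq_slope' f h hcont hdiff
  · rw [uIcc_of_gt h] at hcont
    rw [uIoo_of_gt h] at hdiff ⊢
    rw [slope_comm]
    exact exists_deriv_eq_slope' f h hcont hdiff

theorem continuousAt_deriv_of_isBigO_deriv_deriv {f : ℝ → ℝ} {a : ℝ}
    (hf : ∀ᶠ t in 𝓝 a, DifferentiableAt ℝ f t)
    (hf' : ∀ᶠ t in 𝓝[≠] a, DifferentiableAt ℝ (deriv f) t)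
    (hf'' : deriv (deriv f) =O[𝓝[≠] a] fun _ => (1 : ℝ)) : ContinuousAt (deriv f) a := by
  obtain ⟨C, hC⟩ := hf''.bound
  have hsegment : ∀ᶠ t in 𝓝 a, ∀ s ∈ uIcc a t, DifferentiableAt ℝ f s ∧
      (s ≠ a → DifferentiableAt ℝ (deriv f) s ∧ ‖deriv (deriv f) s‖ ≤ C) := by
    refine (tendsto_const_nhds.uIcc tendsto_id).eventually (eventually_smallSets_forall.2 ?_)
    filter_upwards [hf, eventually_nhdsWithin_iff.1 (hf'.and hC)] with s hs hs'
    exact ⟨hs, fun hsa => by simpa using hs' hsa⟩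
  have hclose : ∀ᶠ t in 𝓝[≠] a, ‖deriv f t - slope f a t‖ ≤ C * ‖t - a‖ := by
    filter_upwards [hsegment.filter_mono nhdsWithin_le_nhds, self_mem_nhdsWithin] with t ht hta
    obtain ⟨c, hc, hslope⟩ :=
      exists_mem_uIoo_deriv_eq_slope (Ne.symm hta) fun s hs => (ht s hs).1
    have hsub : uIcc c t ⊆ uIcc a t := uIcc_subset_uIcc_right (uIoo_subset_uIcc_self hc)
    have hne : ∀ s ∈ uIcc c t, s ≠ a := by
      rintro s hs rfl
      grind [mem_uIcc, uIoo]
    have hC0 : 0 ≤ C := (norm_nonneg _).trans ((ht t right_mem_uIcc).2 hta).2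
    calc ‖deriv f t - slope f a t‖ = ‖deriv f t - deriv f c‖ := by rw [hslope]
      _ ≤ C * ‖t - c‖ := (convex_uIcc c t).norm_image_sub_le_of_norm_deriv_le
          (fun s hs => ((ht s (hsub hs)).2 (hne s hs)).1)
          (fun s hs => ((ht s (hsub hs)).2 (hne s hs)).2) left_mem_uIcc right_mem_uIcc
      _ ≤ C * ‖t - a‖ := by
          gcongr
          exact abs_sub_right_of_mem_uIcc (uIoo_subset_uIcc_self hc)
  have hzero : Tendsto (fun t => C * ‖t - a‖) (𝓝[≠] a) (𝓝 0) := by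
    have hcont : Continuous fun t : ℝ => C * ‖t - a‖ := by fun_prop
    simpa using (hcont.tendsto a).mono_left nhdsWithin_le_nhds
  refine continuousAt_iff_punctured_nhds.2 ?_
  simpa using (squeeze_zero_norm' hclose hzero).add hf.self_of_nhds.hasDerivAt.tendsto_slope

theorem hasDerivAt_of_tendsto_deriv_punctured {E : Type*} [NormedAddCommGroup E] [NormedSpace ℝ E]
    {f : ℝ → E} {a : ℝ} {e : E} (hf : ∀ᶠ t in 𝓝[≠] a, DifferentiableAt ℝ f t)
    (hcont : ContinuousAt f a) (hlim : Tendsto (deriv f) (𝓝[≠] a) (𝓝 e)) : HasDerivAt f e a := by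
  have hdiff : DifferentiableOn ℝ f {t | DifferentiableAt ℝ f t} :=
    fun t ht => DifferentiableAt.differentiableWithinAt ht
  have hright : HasDerivWithinAt f e (Ici a) a :=
    hasDerivWithinAt_Ici_of_tendsto_deriv hdiff hcont.continuousWithinAt
      (nhdsGT_le_nhdsNE a hf) (hlim.mono_left (nhdsGT_le_nhdsNE a))
  have hleft : HasDerivWithinAt f e (Iic a) a :=
    hasDerivWithinAt_Iic_of_tendsto_deriv hdiff hcont.continuousWithinAt
      (nhdsLT_le_nhdsNE a hf) (hlim.mono_left (nhdsLT_le_nhdsNE a))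
  simpa only [Iic_union_Ici, hasDerivWithinAt_univ] using hleft.union hright

theorem tendsto_linear_remainder_div_sq {w : ℝ → ℝ} {a : ℝ}
    (hw : ∀ᶠ t in 𝓝 a, DifferentiableAt ℝ w t) (hw' : DifferentiableAt ℝ (deriv w) a) :
    Tendsto (fun t => (w t - w a - deriv w a * (t - a)) / (t - a) ^ 2) (𝓝[≠] a)
      (𝓝 (deriv (deriv w) a / 2)) := by
  have hnum : ∀ t, DifferentiableAt ℝ w t →
      HasDerivAt (fun s => w s - w a - deriv w a * (s - a)) (deriv w t - deriv w a) t := by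
    intro t ht
    simpa using (ht.hasDerivAt.sub_const (w a)).fun_sub
      (((hasDerivAt_id t).sub_const a).const_mul (deriv w a))
  have hden : ∀ t, HasDerivAt (fun s => (s - a) ^ 2) (2 * (t - a)) t := fun t => by
    simpa using ((hasDerivAt_id t).sub_const a).fun_pow 2
  have hratio : Tendsto (fun t => (deriv w t - deriv w a) / (2 * (t - a))) (𝓝[≠] a)
      (𝓝 (deriv (deriv w) a / 2)) := by
    refine (hw'.hasDerivAt.tendsto_slope.div_const 2).congr fun t => ?_
    rw [slope_def_field, div_div, mul_comm]
  refine HasDerivAt.lhopital_zero_nhdsNE (nhdsWithin_le_nhds (hw.mono hnum))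
    (Eventually.of_forall hden) ?_ ?_ ?_ hratio
  · filter_upwards [self_mem_nhdsWithin] with t hta
    exact mul_ne_zero two_ne_zero (sub_ne_zero.2 hta)
  · simpa using (hnum a hw.self_of_nhds).continuousAt.tendsto.mono_left nhdsWithin_le_nhds
  · simpa using (hden a).continuousAt.tendsto.mono_left nhdsWithin_le_nhds

/-- The square root of `w` that is nonpositive to the left of `a` and nonnegative to its right.
Its value at `a` is `0`, which makes it a square root of `w` there only if `w a = 0`. -/
noncomputable def signedSqrt (a : ℝ) (w : ℝ → ℝ) (t : ℝ) : ℝ :=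
  SignType.sign (t - a) * √(w t)

section SignedSqrt

variable {a c t : ℝ} {w q : ℝ → ℝ}

@[simp]
theorem signedSqrt_self : signedSqrt a w a = 0 := by
  simp [signedSqrt]

theorem signedSqrt_of_lt (h : t < a) : signedSqrt a w t = -√(w t) := by
  simp [signedSqrt, sign_neg (sub_neg.2 h)]

theorem signedSqrt_of_gt (h : a < t) : signedSqrt a w t = √(w t) := by
  simp [signedSqrt, sign_pos (sub_pos.2 h)]

theorem eqOn_signedSqrt {f : ℝ → ℝ} {s : Set ℝ} (hwa : w a = 0)
    (hf : ∀ t ∈ s, (t ≤ a → f t = -√(w t)) ∧ (a ≤ t → f t = √(w t))) :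
    EqOn f (signedSqrt a w) s := fun t ht => by
  rcases lt_trichotomy t a with h | rfl | h
  · rw [(hf t ht).1 h.le, signedSqrt_of_lt h]
  · rw [(hf t ht).2 le_rfl, hwa, Real.sqrt_zero, signedSqrt_self]
  · rw [(hf t ht).2 h.le, signedSqrt_of_gt h]

theorem signedSqrt_sq (hta : t ≠ a) (hwt : 0 ≤ w t) : signedSqrt a w t ^ 2 = w t := by
  rcases hta.lt_or_gt with h | h
  · rw [signedSqrt_of_lt h, neg_sq, Real.sq_sqrt hwt]
  · rw [signedSqrt_of_gt h, Real.sq_sqrt hwt]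

theorem slope_signedSqrt : slope (signedSqrt a w) a t = √(w t / (t - a) ^ 2) := by
  rw [slope_def_field, signedSqrt_self, sub_zero, Real.sqrt_div' _ (sq_nonneg _),
    Real.sqrt_sq_eq_abs]
  rcases lt_trichotomy t a with h | rfl | h
  · rw [signedSqrt_of_lt h, abs_of_neg (sub_neg.2 h), neg_div, div_neg]
  · simp
  · rw [signedSqrt_of_gt h, abs_of_pos (sub_pos.2 h)]

theorem hasDerivAt_signedSqrt_self (hw : ∀ᶠ t in 𝓝 a, DifferentiableAt ℝ w t)
    (hw' : DifferentiableAt ℝ (deriv w) a) (hwa : w a = 0) (hwa' : deriv w a = 0) :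
    HasDerivAt (signedSqrt a w) √(deriv (deriv w) a / 2) a := by
  have hquot : Tendsto (fun t => w t / (t - a) ^ 2) (𝓝[≠] a) (𝓝 (deriv (deriv w) a / 2)) := by
    simpa only [hwa, hwa', sub_zero, zero_mul] using tendsto_linear_remainder_div_sq hw hw'
  exact hasDerivAt_iff_tendsto_slope.2 (hquot.sqrt.congr fun t => slope_signedSqrt.symm)

theorem hasDerivAt_signedSqrt_of_ne (hta : t ≠ a) (hw : DifferentiableAt ℝ w t) (hwt : w t ≠ 0) :
    HasDerivAt (signedSqrt a w) (deriv w t / (2 * signedSqrt a w t)) t := by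
  have hsqrt : HasDerivAt (fun s => √(w s)) (deriv w t / (2 * √(w t))) t := hw.hasDerivAt.sqrt hwt
  rcases hta.lt_or_gt with h | h
  · rw [signedSqrt_of_lt h, mul_neg, div_neg]
    exact hsqrt.neg.congr_of_eventuallyEq
      ((eventually_lt_nhds h).mono fun s hs => signedSqrt_of_lt hs)
  · rw [signedSqrt_of_gt h]
    exact hsqrt.congr_of_eventuallyEq
      ((eventually_gt_nhds h).mono fun s hs => signedSqrt_of_gt hs)

theorem hasDerivAt_deriv_signedSqrt_of_ne (hta : t ≠ a)
    (hw : ∀ᶠ s in 𝓝 t, DifferentiableAt ℝ w s) (hw' : DifferentiableAt ℝ (deriv w) t)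
    (hwt : 0 < w t) (heq : 2 * w t * deriv (deriv w) t = deriv w t ^ 2 + c * w t ^ 2) :
    HasDerivAt (deriv (signedSqrt a w)) (c * signedSqrt a w t / 4) t := by
  have hsq : signedSqrt a w t ^ 2 = w t := signedSqrt_sq hta hwt.le
  have hne : signedSqrt a w t ≠ 0 := fun h => hwt.ne' (by rw [← hsq, h, zero_pow two_ne_zero])
  have hderiv : deriv (signedSqrt a w) =ᶠ[𝓝 t] fun s => deriv w s / (2 * signedSqrt a w s) := by
    filter_upwards [hw, eventually_ne_nhds hta,
      hw.self_of_nhds.continuousAt.eventually_ne hwt.ne'] with s hs hsa hws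
    exact (hasDerivAt_signedSqrt_of_ne hsa hs hws).deriv
  have hquot := hw'.hasDerivAt.div
    ((hasDerivAt_signedSqrt_of_ne hta hw.self_of_nhds hwt.ne').const_mul 2)
    (mul_ne_zero two_ne_zero hne)
  refine (hquot.congr_of_eventuallyEq hderiv).congr_deriv ?_
  rw [← hsq] at heq
  field_simp
  linear_combination 4 * heq

theorem differentiableAt_signedSqrt (hw : ∀ᶠ s in 𝓝 t, DifferentiableAt ℝ w s)
    (hw' : DifferentiableAt ℝ (deriv w) t) (hwa : w a = 0)
    (hpos : ∀ᶠ s in 𝓝 t, s ≠ a → 0 < w s) : DifferentiableAt ℝ (signedSqrt a w) t := by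
  rcases eq_or_ne t a with rfl | hta
  · have hmin : IsLocalMin w t := hpos.mono fun s hs => by
      rcases eq_or_ne s t with rfl | hst
      · exact le_rfl
      · exact hwa.trans_le (hs hst).le
    exact (hasDerivAt_signedSqrt_self hw hw' hwa hmin.deriv_eq_zero).differentiableAt
  · exact (hasDerivAt_signedSqrt_of_ne hta hw.self_of_nhds
      (hpos.self_of_nhds hta).ne').differentiableAt

theorem hasDerivAt_deriv_signedSqrt_self (hw : ∀ᶠ t in 𝓝 a, DifferentiableAt ℝ w t)
    (hw' : ∀ᶠ t in 𝓝 a, DifferentiableAt ℝ (deriv w) t) (hwa : w a = 0)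
    (hpos : ∀ᶠ t in 𝓝 a, t ≠ a → 0 < w t) (hq : q =O[𝓝[≠] a] fun _ => (1 : ℝ))
    (heq : ∀ᶠ t in 𝓝[≠] a, 2 * w t * deriv (deriv w) t = deriv w t ^ 2 + q t * w t ^ 2) :
    HasDerivAt (deriv (signedSqrt a w)) 0 a := by
  have hdiff : ∀ᶠ t in 𝓝 a, DifferentiableAt ℝ (signedSqrt a w) t := by
    filter_upwards [hw.eventually_nhds, hw', hpos.eventually_nhds] with t h h' hp
    exact differentiableAt_signedSqrt h h' hwa hp
  have hderiv : ∀ᶠ t in 𝓝[≠] a,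
      HasDerivAt (deriv (signedSqrt a w)) (q t * signedSqrt a w t / 4) t := by
    filter_upwards [nhdsWithin_le_nhds hw.eventually_nhds, nhdsWithin_le_nhds hw',
      nhdsWithin_le_nhds hpos, heq, self_mem_nhdsWithin] with t h h' hp he hta
    exact hasDerivAt_deriv_signedSqrt_of_ne hta h h' (hp hta) he
  have hdiff' : ∀ᶠ t in 𝓝[≠] a, DifferentiableAt ℝ (deriv (signedSqrt a w)) t :=
    hderiv.mono fun t ht => ht.differentiableAt
  have hzero : Tendsto (signedSqrt a w) (𝓝[≠] a) (𝓝 0) := by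
    simpa only [signedSqrt_self] using
      hdiff.self_of_nhds.continuousAt.tendsto.mono_left nhdsWithin_le_nhds
  have hprod : Tendsto (fun t => q t * signedSqrt a w t) (𝓝[≠] a) (𝓝 0) := by
    simpa only [mul_one, isLittleO_one_iff] using hq.mul_isLittleO ((isLittleO_one_iff ℝ).2 hzero)
  have hlim : Tendsto (deriv (deriv (signedSqrt a w))) (𝓝[≠] a) (𝓝 0) := by
    rw [← zero_div 4]
    exact (hprod.div_const 4).congr' (hderiv.mono fun t ht => ht.deriv.symm)
  exact hasDerivAt_of_tendsto_deriv_punctured hdiff'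
    (continuousAt_deriv_of_isBigO_deriv_deriv hdiff hdiff' (hlim.isBigO_one ℝ)) hlim

theorem hasDerivAt_deriv_signedSqrt (hw : ∀ᶠ s in 𝓝 t, DifferentiableAt ℝ w s)
    (hw' : ∀ᶠ s in 𝓝 t, DifferentiableAt ℝ (deriv w) s) (hwa : w a = 0)
    (hpos : ∀ᶠ s in 𝓝 t, s ≠ a → 0 < w s) (hq : ContinuousAt q t)
    (heq : ∀ᶠ s in 𝓝 t, 2 * w s * deriv (deriv w) s = deriv w s ^ 2 + q s * w s ^ 2) :
    HasDerivAt (deriv (signedSqrt a w)) (q t * signedSqrt a w t / 4) t := by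
  rcases eq_or_ne t a with rfl | hta
  · rw [signedSqrt_self, mul_zero, zero_div]
    exact hasDerivAt_deriv_signedSqrt_self hw hw' hwa hpos
      ((hq.tendsto.isBigO_one ℝ).mono nhdsWithin_le_nhds) (nhdsWithin_le_nhds heq)
  · exact hasDerivAt_deriv_signedSqrt_of_ne hta hw hw'.self_of_nhds (hpos.self_of_nhds hta)
      heq.self_of_nhds

end SignedSqrt

theorem signed_sqrt_solves_second_order_general {I : Set ℝ} (hopen : IsOpen I) {a : ℝ} {w : ℝ → ℝ}
    (hd1 : ∀ t ∈ I, DifferentiableAt ℝ w t)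
    (hd2 : ∀ t ∈ I, DifferentiableAt ℝ (deriv w) t)
    (heq : ∀ t ∈ I, 2 * w t * deriv (deriv w) t =
      (deriv w t) ^ 2 + 3 * w t ^ 4 + 8 * t * w t ^ 3 + 4 * t ^ 2 * w t ^ 2)
    (hza : w a = 0) (hpos : ∀ t ∈ I, t ≠ a → 0 < w t) {f : ℝ → ℝ}
    (hf : ∀ t ∈ I, (t ≤ a → f t = -√(w t)) ∧ (a ≤ t → f t = √(w t))) :
    (∀ t ∈ I, DifferentiableAt ℝ f t) ∧ (∀ t ∈ I, DifferentiableAt ℝ (deriv f) t) ∧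
      (∀ t ∈ I, 4 * deriv (deriv f) t = f t * (3 * f t ^ 2 + 2 * t) * (f t ^ 2 + 2 * t)) := by
  have hfs : EqOn f (signedSqrt a w) I := eqOn_signedSqrt hza hf
  have hsq : ∀ t ∈ I, f t ^ 2 = w t := fun t ht => by
    rcases eq_or_ne t a with rfl | hta
    · rw [hfs ht, signedSqrt_self, hza, zero_pow two_ne_zero]
    · rw [hfs ht, signedSqrt_sq hta (hpos t ht hta).le]
  have hnear : ∀ t ∈ I, ∀ᶠ s in 𝓝 t, s ∈ I := fun t ht => hopen.mem_nhds ht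
  have hderiv : ∀ t ∈ I, HasDerivAt (deriv f)
      ((3 * w t ^ 2 + 8 * t * w t + 4 * t ^ 2) * f t / 4) t := fun t ht => by
    have hq : ContinuousAt (fun s => 3 * w s ^ 2 + 8 * s * w s + 4 * s ^ 2) t := by
      have := (hd1 t ht).continuousAt
      fun_prop
    rw [hfs ht]
    refine (hasDerivAt_deriv_signedSqrt ((hnear t ht).mono hd1) ((hnear t ht).mono hd2) hza
      ((hnear t ht).mono hpos) hq ?_).congr_of_eventuallyEq
        ((hnear t ht).mono (hfs.deriv hopen))
    exact (hnear t ht).mono fun s hs => (heq s hs).trans (by ring)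
  refine ⟨fun t ht => ?_, fun t ht => (hderiv t ht).differentiableAt, fun t ht => ?_⟩
  · exact (differentiableAt_signedSqrt ((hnear t ht).mono hd1) (hd2 t ht) hza
      ((hnear t ht).mono hpos)).congr_of_eventuallyEq ((hnear t ht).mono hfs)
  · rw [(hderiv t ht).deriv, ← hsq t ht]
    ring

/-- Let `w` be three times differentiable on an open interval `I`, a solution of the
rearranged equation PIV₀ (parameters `α = β = 0`), with an isolated zero at `a ∈ I` and
`w > 0` on `I \ {a}`. Then the signed square root `f` of `w` (negative left of `a`,
positive right of `a`) is twice differentiable on `I` and satisfies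
`4 f'' = f (3 f² + 2 t)(f² + 2 t)` on `I`. -/
theorem signed_sqrt_solves_second_order (I : Set ℝ) (hopen : IsOpen I)
    (hint : I.OrdConnected) (a : ℝ) (ha : a ∈ I) (w : ℝ → ℝ)
    (hd1 : ∀ t ∈ I, DifferentiableAt ℝ w t)
    (hd2 : ∀ t ∈ I, DifferentiableAt ℝ (deriv w) t)
    (hd3 : ∀ t ∈ I, DifferentiableAt ℝ (deriv (deriv w)) t)
    (heq : ∀ t ∈ I, 2 * w t * deriv (deriv w) t =
      (deriv w t) ^ 2 + 3 * w t ^ 4 + 8 * t * w t ^ 3 + 4 * t ^ 2 * w t ^ 2)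
    (hza : w a = 0) (hpos : ∀ t ∈ I, t ≠ a → 0 < w t)
    (f : ℝ → ℝ)
    (hf : ∀ t ∈ I, (t ≤ a → f t = -Real.sqrt (w t)) ∧ (a ≤ t → f t = Real.sqrt (w t))) :
    (∀ t ∈ I, DifferentiableAt ℝ f t) ∧ (∀ t ∈ I, DifferentiableAt ℝ (deriv f) t) ∧
      (∀ t ∈ I, 4 * deriv (deriv f) t = f t * (3 * f t ^ 2 + 2 * t) * (f t ^ 2 + 2 * t)) :=
  signed_sqrt_solves_second_order_general hopen hd1 hd2 heq hza hpos hf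
end

section
/- Let U ⊆ ℂ be a nonempty connected open set and let w : ℂ → ℂ be analytic on U and satisfy equation XXXII, namely 2·w(z)·w''(z) = (w'(z))² − 1 for all z ∈ U. Then there exist constants a, b, c ∈ ℂ with b² − 4·a·c = 1 such that w(z) = a·z² + b·z + c for all z ∈ U. -/
/-!
Write `w‴` for the third derivative. Differentiating `2 w w″ = (w′)² − d` cancels the terms
`2 w′ w″` and leaves `w w‴ = 0`. Germs of analytic functions of one variable have no zero
divisors, so `w‴ = 0` near a point `z₀`, and `w` is there equal to its second order Taylor
polynomial at `z₀`. The discriminant of that polynomial is `w′(z₀)² − 2 w(z₀) w″(z₀) = d`, and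
the identity theorem carries the equality over to the whole domain.
-/

open Filter Topology Nat

variable {𝕜 : Type*} [NontriviallyNormedField 𝕜]

section VectorValued

variable {E : Type*} [NormedAddCommGroup E] [NormedSpace 𝕜 E] {g : 𝕜 → E} {z₀ : 𝕜}

theorem eventuallyEq_zero_or_eventuallyEq_zero_of_smul {f : 𝕜 → 𝕜} (hf : AnalyticAt 𝕜 f z₀)
    (hg : AnalyticAt 𝕜 g z₀) (hfg : f • g =ᶠ[𝓝 z₀] 0) : f =ᶠ[𝓝 z₀] 0 ∨ g =ᶠ[𝓝 z₀] 0 := by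
  have horder : analyticOrderAt f z₀ + analyticOrderAt g z₀ = ⊤ := by
    rw [← analyticOrderAt_smul hf hg]
    exact analyticOrderAt_eq_top.mpr hfg
  exact (ENat.add_eq_top.mp horder).imp analyticOrderAt_eq_top.mp analyticOrderAt_eq_top.mp

theorem iteratedDeriv_eventuallyEq_zero_of_le {m n : ℕ} (hmn : m ≤ n)
    (hm : iteratedDeriv m g =ᶠ[𝓝 z₀] 0) : iteratedDeriv n g =ᶠ[𝓝 z₀] 0 := by
  induction n, hmn using Nat.le_induction with
  | base => exact hm
  | succ n _ hn =>
    rw [iteratedDeriv_succ]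
    simpa using! hn.deriv

end VectorValued

variable [CompleteSpace 𝕜] [CharZero 𝕜] {f w : 𝕜 → 𝕜} {z₀ d : 𝕜} {U : Set 𝕜}

theorem eventuallyEq_taylor_of_iteratedDeriv_eventuallyEq_zero {n : ℕ} (hf : AnalyticAt 𝕜 f z₀)
    (hn : iteratedDeriv n f =ᶠ[𝓝 z₀] 0) :
    f =ᶠ[𝓝 z₀] fun z ↦ ∑ k ∈ Finset.range n, iteratedDeriv k f z₀ / k ! * (z - z₀) ^ k := by
  filter_upwards [hf.hasFPowerSeriesAt.eventually_hasSum_sub] with z hz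
  refine hz.unique ?_
  simp only [FormalMultilinearSeries.ofScalars_apply_eq, smul_eq_mul]
  refine hasSum_sum_of_ne_finset_zero fun k hk ↦ ?_
  have hnk : n ≤ k := by simpa using hk
  simp [(iteratedDeriv_eventuallyEq_zero_of_le hnk hn).eq_of_nhds]

theorem eqOn_taylor_of_iteratedDeriv_eventuallyEq_zero {n : ℕ} (hf : AnalyticOnNhd 𝕜 f U)
    (hU : IsPreconnected U) (hz₀ : z₀ ∈ U) (hn : iteratedDeriv n f =ᶠ[𝓝 z₀] 0) :
    Set.EqOn f (fun z ↦ ∑ k ∈ Finset.range n, iteratedDeriv k f z₀ / k ! * (z - z₀) ^ k) U :=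
  hf.eqOn_of_preconnected_of_eventuallyEq (fun z _ ↦ by fun_prop) hU hz₀
    (eventuallyEq_taylor_of_iteratedDeriv_eventuallyEq_zero (hf z₀ hz₀) hn)

theorem mul_deriv_deriv_deriv_eq_zero_of_xxxii (hw : AnalyticAt 𝕜 w z₀)
    (heq : ∀ᶠ z in 𝓝 z₀, 2 * w z * deriv (deriv w) z = deriv w z ^ 2 - d) :
    w z₀ * deriv (deriv (deriv w)) z₀ = 0 := by
  have hw₀ := hw.differentiableAt.hasDerivAt
  have hw₁ := hw.deriv.differentiableAt.hasDerivAt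
  have hw₂ := hw.deriv.deriv.differentiableAt.hasDerivAt
  have hderiv : 2 * deriv w z₀ * deriv (deriv w) z₀ + 2 * w z₀ * deriv (deriv (deriv w)) z₀ =
      2 * deriv w z₀ * deriv (deriv w) z₀ := by
    simpa using ((hw₀.const_mul 2).fun_mul hw₂).unique
      (((hw₁.fun_pow 2).sub_const d).congr_of_eventuallyEq heq)
  have hmul : 2 * (w z₀ * deriv (deriv (deriv w)) z₀) = 0 := by linear_combination hderiv
  exact (mul_eq_zero.mp hmul).resolve_left two_ne_zero

theorem iteratedDeriv_three_eventuallyEq_zero_of_xxxii (hw : AnalyticAt 𝕜 w z₀)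
    (heq : ∀ᶠ z in 𝓝 z₀, 2 * w z * deriv (deriv w) z = deriv w z ^ 2 - d) :
    iteratedDeriv 3 w =ᶠ[𝓝 z₀] 0 := by
  have hmul : w • deriv (deriv (deriv w)) =ᶠ[𝓝 z₀] 0 := by
    filter_upwards [hw.eventually_analyticAt, heq.eventually_nhds] with z hwz heqz
    exact mul_deriv_deriv_deriv_eq_zero_of_xxxii hwz heqz
  rcases eventuallyEq_zero_or_eventuallyEq_zero_of_smul hw hw.deriv.deriv.deriv hmul with hw₀ | hw₃
  · exact iteratedDeriv_eventuallyEq_zero_of_le (Nat.zero_le 3) (by rwa [iteratedDeriv_zero])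
  · simpa only [iteratedDeriv_succ, iteratedDeriv_zero] using hw₃

theorem xxxii_solutions_quadratic_general (hU : IsPreconnected U) (hz₀ : z₀ ∈ U)
    (hw : AnalyticOnNhd 𝕜 w U)
    (heq : ∀ᶠ z in 𝓝 z₀, 2 * w z * deriv (deriv w) z = deriv w z ^ 2 - d) :
    ∃ a b c : 𝕜, b ^ 2 - 4 * a * c = d ∧ ∀ z ∈ U, w z = a * z ^ 2 + b * z + c := by
  have htaylor : ∀ z ∈ U,
      w z = w z₀ + deriv w z₀ * (z - z₀) + deriv (deriv w) z₀ / 2 * (z - z₀) ^ 2 := fun z hz ↦ by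
    simpa [Finset.sum_range_succ, iteratedDeriv_succ] using
      eqOn_taylor_of_iteratedDeriv_eventuallyEq_zero hw hU hz₀
        (iteratedDeriv_three_eventuallyEq_zero_of_xxxii (hw z₀ hz₀) heq) hz
  refine ⟨deriv (deriv w) z₀ / 2, deriv w z₀ - deriv (deriv w) z₀ * z₀,
    w z₀ - deriv w z₀ * z₀ + deriv (deriv w) z₀ / 2 * z₀ ^ 2, ?_, fun z hz ↦ ?_⟩
  · linear_combination -heq.self_of_nhds
  · linear_combination htaylor z hz

/-- If `w` is analytic on a nonempty connected open set `U ⊆ ℂ` and satisfies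
equation XXXII, `2 w w'' = (w')² − 1`, on `U`, then `w` is a quadratic
`w(z) = a z² + b z + c` with discriminant `b² − 4 a c = 1`. -/
theorem xxxii_solutions_quadratic (U : Set ℂ) (hne : U.Nonempty) (hconn : IsConnected U)
    (hopen : IsOpen U) (w : ℂ → ℂ) (hw : AnalyticOnNhd ℂ w U)
    (heq : ∀ z ∈ U, 2 * w z * deriv (deriv w) z = (deriv w z) ^ 2 - 1) :
    ∃ a b c : ℂ, b ^ 2 - 4 * a * c = 1 ∧ ∀ z ∈ U, w z = a * z ^ 2 + b * z + c :=
  have ⟨_, hz₀⟩ := hne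
  xxxii_solutions_quadratic_general hconn.isPreconnected hz₀ hw
    (eventually_of_mem (hopen.mem_nhds hz₀) heq)
end

section
/- Let U ⊆ ℂ be a nonempty connected open set and let u : ℂ → ℂ be analytic on U such that w = u² satisfies equation XXXII on U, namely 2·w(z)·w''(z) = (w'(z))² − 1 for all z ∈ U. Then u has no zeros in U and there exists a constant K ∈ ℂ such that 4·u(z)²·(u'(z))² = 4·K·u(z)² + 1 for all z ∈ U (equivalently, (u')² = K + 1/(4u²)). -/
/-!
Equation XXXII makes the quotient `((w')² − 1) / w` stationary wherever `w ≠ 0`, its derivative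
being `w' (2 w w'' − (w')² + 1) / w²`. A zero of `w` forces `(w')² = 1`, but a square `w = u²` has
`w' = 2 u u' = 0` at its zeros, so `u` cannot vanish. Writing `4 K` for the constant value of the
quotient and substituting `w' = 2 u u'` in `(w')² = 4 K w + 1` gives the claim.
-/

section Pointwise

variable {𝕜 F : Type*} [NontriviallyNormedField 𝕜] [NontriviallyNormedField F] [NormedAlgebra 𝕜 F]
  {z : 𝕜}

theorem deriv_fun_sq {u : 𝕜 → F} (hu : DifferentiableAt 𝕜 u z) :
    deriv (fun x => u x ^ 2) z = 2 * u z * deriv u z := by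
  simpa using deriv_fun_pow hu 2

theorem ne_zero_of_xxxii_sq {u : 𝕜 → F} (hu : DifferentiableAt 𝕜 u z)
    (heq : 2 * u z ^ 2 * deriv (deriv fun x => u x ^ 2) z =
      deriv (fun x => u x ^ 2) z ^ 2 - 1) :
    u z ≠ 0 := by
  intro hz
  have hderiv : deriv (fun x => u x ^ 2) z = 0 := by simp [deriv_fun_sq hu, hz]
  simp [hderiv, hz] at heq

theorem hasDerivAt_deriv_sq_sub_one_div_of_xxxii {w : 𝕜 → F} (hw : DifferentiableAt 𝕜 w z)
    (hw' : DifferentiableAt 𝕜 (deriv w) z) (hz : w z ≠ 0)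
    (heq : 2 * w z * deriv (deriv w) z = deriv w z ^ 2 - 1) :
    HasDerivAt (fun x => (deriv w x ^ 2 - 1) / w x) 0 z := by
  have hquot := ((hw'.hasDerivAt.fun_pow 2).sub_const 1).fun_div hw.hasDerivAt hz
  refine hquot.congr_deriv (div_eq_zero_iff.mpr (Or.inl ?_))
  push_cast
  linear_combination deriv w z * heq

end Pointwise

section FirstIntegral

variable {𝕜 F : Type*} [RCLike 𝕜] [NontriviallyNormedField F] [NormedAlgebra 𝕜 F] {U : Set 𝕜}

theorem exists_deriv_sq_eq_mul_add_one_of_xxxii (hopen : IsOpen U) (hconn : IsPreconnected U)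
    {w : 𝕜 → F} (hw : DifferentiableOn 𝕜 w U) (hw' : DifferentiableOn 𝕜 (deriv w) U)
    (hne : ∀ z ∈ U, w z ≠ 0)
    (heq : ∀ z ∈ U, 2 * w z * deriv (deriv w) z = deriv w z ^ 2 - 1) :
    ∃ C : F, ∀ z ∈ U, deriv w z ^ 2 = C * w z + 1 := by
  have hquot : ∀ z ∈ U, HasDerivAt (fun x => (deriv w x ^ 2 - 1) / w x) 0 z := fun z hz =>
    hasDerivAt_deriv_sq_sub_one_div_of_xxxii (hw.differentiableAt (hopen.mem_nhds hz))
      (hw'.differentiableAt (hopen.mem_nhds hz)) (hne z hz) (heq z hz)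
  obtain ⟨C, hC⟩ := hopen.exists_is_const_of_deriv_eq_zero hconn
    (fun z hz => (hquot z hz).differentiableAt.differentiableWithinAt)
    (fun z hz => (hquot z hz).deriv)
  exact ⟨C, fun z hz => sub_eq_iff_eq_add.mp ((div_eq_iff (hne z hz)).mp (hC z hz))⟩

theorem xxxii_square_substitution_first_integral_general (hopen : IsOpen U)
    (hconn : IsPreconnected U) {u : 𝕜 → F} (hu : DifferentiableOn 𝕜 u U)
    (hw' : DifferentiableOn 𝕜 (deriv fun z => u z ^ 2) U)
    (heq : ∀ z ∈ U, 2 * u z ^ 2 * deriv (deriv fun z => u z ^ 2) z =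
      deriv (fun z => u z ^ 2) z ^ 2 - 1) :
    (∀ z ∈ U, u z ≠ 0) ∧
      ∃ K : F, ∀ z ∈ U, 4 * u z ^ 2 * deriv u z ^ 2 = 4 * K * u z ^ 2 + 1 := by
  have hu_at : ∀ z ∈ U, DifferentiableAt 𝕜 u z := fun z hz =>
    hu.differentiableAt (hopen.mem_nhds hz)
  have hne : ∀ z ∈ U, u z ≠ 0 := fun z hz => ne_zero_of_xxxii_sq (hu_at z hz) (heq z hz)
  obtain ⟨C, hC⟩ := exists_deriv_sq_eq_mul_add_one_of_xxxii hopen hconn (hu.fun_pow 2) hw'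
    (fun z hz => pow_ne_zero 2 (hne z hz)) heq
  have : CharZero F := charZero_of_injective_algebraMap (algebraMap 𝕜 F).injective
  have hfour : (4 : F) ≠ 0 := by norm_num
  refine ⟨hne, C / 4, fun z hz => ?_⟩
  calc 4 * u z ^ 2 * deriv u z ^ 2 = deriv (fun x => u x ^ 2) z ^ 2 := by
        rw [deriv_fun_sq (hu_at z hz)]; ring
    _ = C * u z ^ 2 + 1 := hC z hz
    _ = 4 * (C / 4) * u z ^ 2 + 1 := by rw [mul_div_cancel₀ C hfour]

end FirstIntegral

/-- If `u` is analytic on a nonempty connected open set `U ⊆ ℂ` and `w = u²` satisfies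
equation XXXII, `2 w w'' = (w')² − 1`, on `U`, then `u` has no zeros in `U` and there
is a constant `K` with `4 u² (u')² = 4 K u² + 1` on `U` (i.e. `(u')² = K + 1/(4u²)`). -/
theorem xxxii_square_substitution_first_integral (U : Set ℂ) (hne : U.Nonempty)
    (hconn : IsConnected U) (hopen : IsOpen U) (u : ℂ → ℂ) (hu : AnalyticOnNhd ℂ u U)
    (heq : ∀ z ∈ U, 2 * (fun z => u z ^ 2) z * deriv (deriv (fun z => u z ^ 2)) z =
      (deriv (fun z => u z ^ 2) z) ^ 2 - 1) :
    (∀ z ∈ U, u z ≠ 0) ∧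
      ∃ K : ℂ, ∀ z ∈ U, 4 * u z ^ 2 * (deriv u z) ^ 2 = 4 * K * u z ^ 2 + 1 :=
  xxxii_square_substitution_first_integral_general hopen hconn.isPreconnected
    hu.differentiableOn (hu.fun_pow 2).deriv.differentiableOn heq
end

section
/- Let U ⊆ ℂ be a nonempty connected open set and let w : ℂ → ℂ be analytic on U and satisfy equation XXXII, namely 2·w(z)·w''(z) = (w'(z))² − 1 for all z ∈ U. Then there exists a constant a ∈ ℂ such that (w'(z))² = 1 + 4·a·w(z) for all z ∈ U. -/
/-!
Differentiating `2 w w'' = (w')² - c` gives `w w''' = 0`. Analytic germs form an integral domain, so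
near a given point either `w` vanishes or `w''` is constant; in both cases the equation itself reads
`(w')² = c + 2 w''(z₀) w` there. The identity theorem then propagates this relation along a
preconnected set `U`. Unless it is a single point, `U` accumulates at each of its points, so an
equation between analytic functions that holds on `U` also holds near `U`.
-/

open Filter Topology

section AnalyticGerms

variable {𝕜 : Type*} [NontriviallyNormedField 𝕜] {z₀ : 𝕜}

theorem eventually_eq_zero_or_of_eventually_mul_eq_zero {f g : 𝕜 → 𝕜}
    (hf : AnalyticAt 𝕜 f z₀) (hg : AnalyticAt 𝕜 g z₀) (hfg : ∀ᶠ z in 𝓝 z₀, f z * g z = 0) :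
    (∀ᶠ z in 𝓝 z₀, f z = 0) ∨ ∀ᶠ z in 𝓝 z₀, g z = 0 := by
  have order_mul : analyticOrderAt (f * g) z₀ = ⊤ := analyticOrderAt_eq_top.mpr hfg
  rwa [analyticOrderAt_mul hf hg, ENat.add_eq_top, analyticOrderAt_eq_top,
    analyticOrderAt_eq_top] at order_mul

theorem eventually_eq_of_eventually_deriv_eq_zero [CharZero 𝕜] {E : Type*}
    [NormedAddCommGroup E] [NormedSpace 𝕜 E] [CompleteSpace E] {f : 𝕜 → E}
    (hf : AnalyticAt 𝕜 f z₀) (hf' : ∀ᶠ z in 𝓝 z₀, deriv f z = 0) :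
    ∀ᶠ z in 𝓝 z₀, f z = f z₀ := by
  have order_deriv : analyticOrderAt (deriv fun z ↦ f z - f z₀) z₀ = ⊤ := by
    simpa only [deriv_sub_const_fun, analyticOrderAt_eq_top] using hf'
  have order_sub : analyticOrderAt (fun z ↦ f z - f z₀) z₀ = ⊤ :=
    (analyticOrderAt_deriv_eq_top_iff_of_eq_zero (hf.sub analyticAt_const)
      (sub_self _)).mp order_deriv
  simpa only [analyticOrderAt_eq_top, sub_eq_zero] using order_sub

theorem eventuallyEq_of_eqOn_preconnected {E : Type*} [NormedAddCommGroup E] [NormedSpace 𝕜 E]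
    {f g : 𝕜 → E} {U : Set 𝕜} (hU : IsPreconnected U) (hU' : U.Nontrivial) (hz₀ : z₀ ∈ U)
    (hf : AnalyticAt 𝕜 f z₀) (hg : AnalyticAt 𝕜 g z₀) (hfg : Set.EqOn f g U) :
    f =ᶠ[𝓝 z₀] g := by
  have accumulates : ∃ᶠ z in 𝓝[≠] z₀, z ∈ U :=
    frequently_mem_iff_neBot.mpr (hU.preperfect_of_nontrivial hU' z₀ hz₀)
  exact (hf.frequently_eq_iff_eventually_eq hg).mp (accumulates.mono hfg)

end AnalyticGerms

section FirstIntegral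

variable {𝕜 : Type*} [NontriviallyNormedField 𝕜] [CompleteSpace 𝕜] [CharZero 𝕜]
  {w : 𝕜 → 𝕜} {c z₀ : 𝕜}

theorem mul_deriv_deriv_deriv_eq_zero (hw : AnalyticAt 𝕜 w z₀)
    (heq : ∀ᶠ z in 𝓝 z₀, 2 * w z * deriv (deriv w) z = deriv w z ^ 2 - c) :
    w z₀ * deriv (deriv (deriv w)) z₀ = 0 := by
  have hw₁ := hw.differentiableAt.hasDerivAt
  have hw₂ := hw.deriv.differentiableAt.hasDerivAt
  have hw₃ := hw.deriv.deriv.differentiableAt.hasDerivAt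
  have deriv_sides_eq :=
    ((hw₁.const_mul 2).mul hw₃).unique (((hw₂.pow 2).sub_const c).congr_of_eventuallyEq heq)
  push_cast at deriv_sides_eq
  linear_combination deriv_sides_eq / 2

theorem eventually_deriv_sq_eq (hw : AnalyticAt 𝕜 w z₀)
    (heq : ∀ᶠ z in 𝓝 z₀, 2 * w z * deriv (deriv w) z = deriv w z ^ 2 - c) :
    ∀ᶠ z in 𝓝 z₀, deriv w z ^ 2 = c + 2 * deriv (deriv w) z₀ * w z := by
  have mul_third_deriv : ∀ᶠ z in 𝓝 z₀, w z * deriv (deriv (deriv w)) z = 0 := by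
    filter_upwards [hw.eventually_analyticAt, heq.eventually_nhds] with z hwz heqz
    exact mul_deriv_deriv_deriv_eq_zero hwz heqz
  rcases eventually_eq_zero_or_of_eventually_mul_eq_zero hw hw.deriv.deriv.deriv
    mul_third_deriv with w_zero | third_deriv_zero
  · filter_upwards [heq, w_zero] with z heqz hwz
    linear_combination -heqz + 2 * (deriv (deriv w) z - deriv (deriv w) z₀) * hwz
  · filter_upwards [heq, eventually_eq_of_eventually_deriv_eq_zero hw.deriv.deriv
      third_deriv_zero] with z heqz second_deriv_const
    linear_combination -heqz + 2 * w z * second_deriv_const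

theorem xxxii_first_integral_general {U : Set 𝕜} (hU : IsPreconnected U)
    (hw : AnalyticOnNhd 𝕜 w U)
    (heq : ∀ z ∈ U, 2 * w z * deriv (deriv w) z = deriv w z ^ 2 - c) (hz₀ : z₀ ∈ U) :
    ∀ z ∈ U, deriv w z ^ 2 = c + 2 * deriv (deriv w) z₀ * w z := by
  rcases U.subsingleton_or_nontrivial with hU' | hU'
  · intro z hz
    rw [hU' hz hz₀]
    linear_combination -heq z₀ hz₀
  have heq_nhds : ∀ᶠ z in 𝓝 z₀, 2 * w z * deriv (deriv w) z = deriv w z ^ 2 - c :=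
    eventuallyEq_of_eqOn_preconnected hU hU' hz₀
      ((analyticAt_const.mul (hw z₀ hz₀)).mul (hw z₀ hz₀).deriv.deriv)
      (((hw z₀ hz₀).deriv.pow 2).sub analyticAt_const) heq
  exact (hw.deriv.pow 2).eqOn_of_preconnected_of_eventuallyEq
    (analyticOnNhd_const.add (analyticOnNhd_const.mul hw)) hU hz₀
    (eventually_deriv_sq_eq (hw z₀ hz₀) heq_nhds)

end FirstIntegral

/-- If `w` is analytic on a nonempty connected open set `U ⊆ ℂ` and satisfies
equation XXXII, `2 w w'' = (w')² − 1`, on `U`, then there is a constant `a` with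
`(w')² = 1 + 4 a w` on `U`. -/
theorem xxxii_first_integral (U : Set ℂ) (hne : U.Nonempty) (hconn : IsConnected U)
    (hopen : IsOpen U) (w : ℂ → ℂ) (hw : AnalyticOnNhd ℂ w U)
    (heq : ∀ z ∈ U, 2 * w z * deriv (deriv w) z = (deriv w z) ^ 2 - 1) :
    ∃ a : ℂ, ∀ z ∈ U, (deriv w z) ^ 2 = 1 + 4 * a * w z := by
  obtain ⟨z₀, hz₀⟩ := hne
  refine ⟨deriv (deriv w) z₀ / 2, fun z hz ↦ ?_⟩
  linear_combination xxxii_first_integral_general hconn.isPreconnected hw heq hz₀ z hz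
end

section
/- Let U ⊆ ℂ be a nonempty connected open set and let w : ℂ → ℂ be analytic on U and satisfy equation XVII (in the case m = 2), namely 2·w(z)·w''(z) = (w'(z))² for all z ∈ U. Then there exist constants p, q ∈ ℂ such that w(z) = (p·z + q)² for all z ∈ U. -/
/-!
Differentiating `2 w w'' = (w')²` gives `w w''' = 0`, so `w''' = 0` on `U` because the ring of
analytic functions on a connected set has no zero divisors. Hence `w` equals its quadratic Taylor
polynomial at any `z₀ ∈ U`, and the equation at `z₀` says exactly that the discriminant of this
polynomial vanishes.
-/

open Finset
open scoped Nat

theorem exists_quadratic_eq_sq_of_discrim_eq_zero {R : Type*} [CommRing R] [NoZeroDivisors R]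
    {a b c : R} (ha : IsSquare a) (hc : IsSquare c) (h : discrim a b c = 0) :
    ∃ p q : R, ∀ x, a * x ^ 2 + b * x + c = (p * x + q) ^ 2 := by
  obtain ⟨p, rfl⟩ := ha
  obtain ⟨q, rfl⟩ := hc
  have hb : b ^ 2 = (2 * p * q) ^ 2 := by
    rw [discrim] at h
    linear_combination h
  rcases sq_eq_sq_iff_eq_or_eq_neg.mp hb with rfl | rfl
  · exact ⟨p, q, fun x => by ring⟩
  · exact ⟨p, -q, fun x => by ring⟩

theorem hasDerivAt_sum_range_pow_div_factorial_smul {𝕜 E : Type*} [NontriviallyNormedField 𝕜]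
    [CharZero 𝕜] [NormedAddCommGroup E] [NormedSpace 𝕜 E] (c : ℕ → E) (n : ℕ) (x₀ x : 𝕜) :
    HasDerivAt (fun y => ∑ k ∈ range (n + 1), ((y - x₀) ^ k / (k ! : 𝕜)) • c k)
      (∑ k ∈ range n, ((x - x₀) ^ k / (k ! : 𝕜)) • c (k + 1)) x := by
  have hterm (k : ℕ) : HasDerivAt (fun y => ((y - x₀) ^ (k + 1) / ((k + 1)! : 𝕜)) • c (k + 1))
      (((x - x₀) ^ k / (k ! : 𝕜)) • c (k + 1)) x := by
    have hpow : HasDerivAt (fun y => (y - x₀) ^ (k + 1)) ((k + 1) * (x - x₀) ^ k) x := by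
      simpa using ((hasDerivAt_id x).sub_const x₀).fun_pow (k + 1)
    convert (hpow.div_const ((k + 1)! : 𝕜)).smul_const (c (k + 1)) using 2
    rw [Nat.factorial_succ, Nat.cast_mul, Nat.cast_succ,
      mul_div_mul_left _ _ (Nat.cast_add_one_ne_zero k)]
  simp only [sum_range_succ' _ n, pow_zero]
  exact (HasDerivAt.fun_sum fun k _ => hterm k).add_const _

theorem eqOn_taylor_sum_of_iteratedDeriv_eq_zero {𝕜 E : Type*} [RCLike 𝕜]
    [NormedAddCommGroup E] [NormedSpace 𝕜 E] {U : Set 𝕜} (hU : IsOpen U)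
    (hU' : IsPreconnected U) {x₀ : 𝕜} (hx₀ : x₀ ∈ U) {n : ℕ} {f : 𝕜 → E}
    (hf : ContDiffOn 𝕜 n f U) (hzero : U.EqOn (iteratedDeriv n f) 0) :
    U.EqOn f fun x => ∑ k ∈ range n, ((x - x₀) ^ k / (k ! : 𝕜)) • iteratedDeriv k f x₀ := by
  induction n generalizing f with
  | zero => exact fun x hx => by simpa using hzero hx
  | succ n ih =>
    obtain ⟨hdiff, -, hderiv⟩ :=
      (contDiffOn_succ_iff_deriv_of_isOpen (n := n) hU).mp (mod_cast hf)
    have htaylor (x : 𝕜) := hasDerivAt_sum_range_pow_div_factorial_smul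
      (fun k => iteratedDeriv k f x₀) n x₀ x
    refine hU.eqOn_of_deriv_eq hU' hdiff
      (fun x _ => (htaylor x).differentiableAt.differentiableWithinAt) (fun x hx => ?_) hx₀ ?_
    · rw [iteratedDeriv_succ'] at hzero
      simp only [(htaylor x).deriv, iteratedDeriv_succ', ih hderiv hzero hx]
    · simp [sum_range_succ']

section EquationXVII

variable {𝕜 : Type*} [NontriviallyNormedField 𝕜] [NeZero (2 : 𝕜)] {U : Set 𝕜} {w : 𝕜 → 𝕜}

theorem mul_deriv_deriv_deriv_eq_zero_of_two_mul_mul_deriv_deriv_eq_sq (hU : IsOpen U)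
    (hw : AnalyticOnNhd 𝕜 w U) (heq : ∀ z ∈ U, 2 * w z * deriv (deriv w) z = deriv w z ^ 2)
    {z : 𝕜} (hz : z ∈ U) : w z * deriv (deriv (deriv w)) z = 0 := by
  have hw₀ := (hw z hz).differentiableAt.hasDerivAt
  have hw' := hw.deriv_of_isOpen hU
  have hw₁ := (hw' z hz).differentiableAt.hasDerivAt
  have hw₂ := (hw'.deriv_of_isOpen hU z hz).differentiableAt.hasDerivAt
  have heq_nhds : (fun y => deriv w y ^ 2) =ᶠ[nhds z] fun y => 2 * w y * deriv (deriv w) y :=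
    Filter.eventuallyEq_of_mem (hU.mem_nhds hz) fun y hy => (heq y hy).symm
  have hderiv : 2 * deriv w z * deriv (deriv w) z + 2 * w z * deriv (deriv (deriv w)) z =
      2 * deriv w z * deriv (deriv w) z := by
    simpa using (((hw₀.const_mul 2).mul hw₂).congr_of_eventuallyEq heq_nhds).unique (hw₁.pow 2)
  have htwo : 2 * (w z * deriv (deriv (deriv w)) z) = 0 := by
    linear_combination hderiv
  exact (mul_eq_zero_iff_left two_ne_zero).mp htwo

theorem iteratedDeriv_three_eq_zero_of_two_mul_mul_deriv_deriv_eq_sq (hU : IsOpen U)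
    (hU' : IsPreconnected U) (hw : AnalyticOnNhd 𝕜 w U)
    (heq : ∀ z ∈ U, 2 * w z * deriv (deriv w) z = deriv w z ^ 2) :
    U.EqOn (iteratedDeriv 3 w) 0 := by
  have hmul (z : 𝕜) (hz : z ∈ U) : w z * iteratedDeriv 3 w z = 0 := by
    simpa only [iteratedDeriv_succ, iteratedDeriv_zero] using
      mul_deriv_deriv_deriv_eq_zero_of_two_mul_mul_deriv_deriv_eq_sq hU hw heq hz
  have hw₃ : AnalyticOnNhd 𝕜 (iteratedDeriv 3 w) U := by
    simpa only [iteratedDeriv_succ, iteratedDeriv_zero] using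
      ((hw.deriv_of_isOpen hU).deriv_of_isOpen hU).deriv_of_isOpen hU
  rcases hw.eq_zero_or_eq_zero_of_mul_eq_zero hw₃ hmul hU' with hzero | hthird
  · have hconst : U.EqOn w fun _ => 0 := hzero
    exact fun z hz => by simpa using hconst.iteratedDeriv_of_isOpen hU 3 hz
  · exact hthird

end EquationXVII

/-- If `w` is analytic on a nonempty connected open set `U ⊆ ℂ` and satisfies
equation XVII (case m = 2), `2 w w'' = (w')²`, on `U`, then `w` is a perfect square
of a linear polynomial: `w(z) = (p z + q)²`. -/
theorem xvii_solutions_perfect_square (U : Set ℂ) (hne : U.Nonempty)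
    (hconn : IsConnected U) (hopen : IsOpen U) (w : ℂ → ℂ) (hw : AnalyticOnNhd ℂ w U)
    (heq : ∀ z ∈ U, 2 * w z * deriv (deriv w) z = (deriv w z) ^ 2) :
    ∃ p q : ℂ, ∀ z ∈ U, w z = (p * z + q) ^ 2 := by
  obtain ⟨z₀, hz₀⟩ := hne
  have hthird : U.EqOn (iteratedDeriv 3 w) 0 :=
    iteratedDeriv_three_eq_zero_of_two_mul_mul_deriv_deriv_eq_sq hopen hconn.isPreconnected hw heq
  have htaylor := eqOn_taylor_sum_of_iteratedDeriv_eq_zero hopen hconn.isPreconnected hz₀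
    hw.contDiffOn_of_completeSpace hthird
  have hdiscrim : discrim (deriv (deriv w) z₀ / 2) (deriv w z₀) (w z₀) = 0 := by
    rw [discrim]
    linear_combination -heq z₀ hz₀
  obtain ⟨p, q, hpq⟩ := exists_quadratic_eq_sq_of_discrim_eq_zero
    (IsAlgClosed.exists_eq_mul_self _) (IsAlgClosed.exists_eq_mul_self _) hdiscrim
  refine ⟨p, q - p * z₀, fun z hz => ?_⟩
  calc w z = deriv (deriv w) z₀ / 2 * (z - z₀) ^ 2 + deriv w z₀ * (z - z₀) + w z₀ := by
        simp only [htaylor hz, sum_range_succ, sum_range_zero, iteratedDeriv_succ,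
          iteratedDeriv_zero, Nat.factorial, smul_eq_mul]
        push_cast
        ring
    _ = (p * (z - z₀) + q) ^ 2 := hpq _
    _ = (p * z + (q - p * z₀)) ^ 2 := by ring
end

section
/- Let U ⊆ ℂ be a nonempty connected open set and let w : ℂ → ℂ be analytic on U and satisfy equation XXIX, namely 2·w(z)·w''(z) = (w'(z))² + 3·w(z)⁴ for all z ∈ U. Then there exists a constant k ∈ ℂ such that w''(z) = 2·w(z)³ + k for all z ∈ U. -/
/-!
Differentiating `2 w w'' - (w')² - 3 w⁴ = 0` gives `2 w (w'' - 2 w³)' = 0`. Germs of analytic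
functions in one variable form an integral domain, so `w` or `(w'' - 2 w³)'` vanishes near a point;
either way `w'' - 2 w³` is constant there, and the identity theorem propagates this to all of `U`.
-/

open Filter Topology

section

variable {𝕜 : Type*} [NontriviallyNormedField 𝕜] {z₀ : 𝕜}

theorem eventuallyEq_zero_or_eventuallyEq_zero_of_mul {f g : 𝕜 → 𝕜} (hf : AnalyticAt 𝕜 f z₀)
    (hg : AnalyticAt 𝕜 g z₀) (hfg : f * g =ᶠ[𝓝 z₀] 0) : f =ᶠ[𝓝 z₀] 0 ∨ g =ᶠ[𝓝 z₀] 0 := by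
  have htop : analyticOrderAt f z₀ + analyticOrderAt g z₀ = ⊤ := by
    rw [← analyticOrderAt_mul hf hg]
    exact analyticOrderAt_eq_top.mpr hfg
  exact (WithTop.add_eq_top.mp htop).imp analyticOrderAt_eq_top.mp analyticOrderAt_eq_top.mp

theorem eventuallyConst_of_deriv_eventuallyEq_zero {E : Type*} [NormedAddCommGroup E]
    [NormedSpace 𝕜 E] [CompleteSpace E] [CharZero 𝕜] {f : 𝕜 → E} (hf : AnalyticAt 𝕜 f z₀)
    (hf' : deriv f =ᶠ[𝓝 z₀] 0) : EventuallyConst f (𝓝 z₀) := by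
  rw [eventuallyConst_iff_analyticOrderAt_sub_eq_top, ← hf.analyticOrderAt_deriv_add_one,
    analyticOrderAt_eq_top.mpr hf', top_add]

/-- The defect `2 w w'' - ((w')² + 3 w⁴)` of a function `w` in equation XXIX: the equation says that
it vanishes. -/
noncomputable def xxixDefect (w : 𝕜 → 𝕜) (z : 𝕜) : 𝕜 :=
  2 * w z * deriv (deriv w) z - (deriv w z ^ 2 + 3 * w z ^ 4)

/-- The first integral `w'' - 2 w³` of equation XXIX. -/
noncomputable def xxixIntegral (w : 𝕜 → 𝕜) (z : 𝕜) : 𝕜 :=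
  deriv (deriv w) z - 2 * w z ^ 3

variable [CompleteSpace 𝕜] {w : 𝕜 → 𝕜}

theorem analyticAt_xxixDefect (hw : AnalyticAt 𝕜 w z₀) : AnalyticAt 𝕜 (xxixDefect w) z₀ := by
  unfold xxixDefect
  fun_prop

theorem analyticAt_xxixIntegral (hw : AnalyticAt 𝕜 w z₀) : AnalyticAt 𝕜 (xxixIntegral w) z₀ := by
  unfold xxixIntegral
  fun_prop

theorem deriv_xxixIntegral (hw : AnalyticAt 𝕜 w z₀) :
    deriv (xxixIntegral w) z₀ = deriv (deriv (deriv w)) z₀ - 6 * w z₀ ^ 2 * deriv w z₀ := by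
  have h₀ := hw.differentiableAt.hasDerivAt
  have h₂ := hw.deriv.deriv.differentiableAt.hasDerivAt
  refine ((h₂.fun_sub ((h₀.fun_pow 3).const_mul 2)).congr_deriv ?_).deriv
  push_cast
  ring

theorem deriv_xxixDefect (hw : AnalyticAt 𝕜 w z₀) :
    deriv (xxixDefect w) z₀ = 2 * (w z₀ * deriv (xxixIntegral w) z₀) := by
  have h₀ := hw.differentiableAt.hasDerivAt
  have h₁ := hw.deriv.differentiableAt.hasDerivAt
  have h₂ := hw.deriv.deriv.differentiableAt.hasDerivAt
  rw [deriv_xxixIntegral hw]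
  refine ((((h₀.const_mul 2).fun_mul h₂).fun_sub
    ((h₁.fun_pow 2).fun_add ((h₀.fun_pow 4).const_mul 3))).congr_deriv ?_).deriv
  push_cast
  ring

variable [CharZero 𝕜]

theorem mul_deriv_xxixIntegral_eventuallyEq_zero (hw : AnalyticAt 𝕜 w z₀)
    (hdefect : xxixDefect w =ᶠ[𝓝 z₀] 0) : w * deriv (xxixIntegral w) =ᶠ[𝓝 z₀] 0 := by
  filter_upwards [hdefect.deriv, hw.eventually_analyticAt] with z hz hwz
  rw [deriv_xxixDefect hwz] at hz
  simpa using hz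

theorem eventuallyConst_xxixIntegral (hw : AnalyticAt 𝕜 w z₀)
    (hdefect : xxixDefect w =ᶠ[𝓝 z₀] 0) : EventuallyConst (xxixIntegral w) (𝓝 z₀) := by
  have hI := analyticAt_xxixIntegral hw
  rcases eventuallyEq_zero_or_eventuallyEq_zero_of_mul hw hI.deriv
    (mul_deriv_xxixIntegral_eventuallyEq_zero hw hdefect) with hw0 | hI'
  · refine eventuallyConst_iff_exists_eventuallyEq.mpr ⟨0, ?_⟩
    filter_upwards [hw0, hw0.deriv.deriv] with z hz hz''
    simp [xxixIntegral, hz, hz'']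
  · exact eventuallyConst_of_deriv_eventuallyEq_zero hI hI'

theorem xxix_second_deriv_integral_general {U : Set 𝕜} (hU : IsPreconnected U) (hz₀ : z₀ ∈ U)
    (hw : AnalyticOnNhd 𝕜 w U)
    (heq : ∃ᶠ z in 𝓝[≠] z₀, 2 * w z * deriv (deriv w) z = deriv w z ^ 2 + 3 * w z ^ 4) :
    ∃ k : 𝕜, ∀ z ∈ U, deriv (deriv w) z = 2 * w z ^ 3 + k := by
  have hdefect : xxixDefect w =ᶠ[𝓝 z₀] 0 :=
    (analyticAt_xxixDefect (hw z₀ hz₀)).frequently_zero_iff_eventually_zero.mp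
      (heq.mono fun _ ↦ sub_eq_zero_of_eq)
  obtain ⟨k, hk⟩ := eventuallyConst_iff_exists_eventuallyEq.mp
    (eventuallyConst_xxixIntegral (hw z₀ hz₀) hdefect)
  have hI : AnalyticOnNhd 𝕜 (xxixIntegral w) U := fun z hz ↦ analyticAt_xxixIntegral (hw z hz)
  have hconst : Set.EqOn (xxixIntegral w) (fun _ ↦ k) U :=
    hI.eqOn_of_preconnected_of_eventuallyEq analyticOnNhd_const hU hz₀ hk
  exact ⟨k, fun z hz ↦ sub_eq_iff_eq_add'.mp (hconst hz)⟩

end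

/-- If `w` is analytic on a nonempty connected open set `U ⊆ ℂ` and satisfies
equation XXIX, `2 w w'' = (w')² + 3 w⁴`, on `U`, then there is a constant `k` with
`w'' = 2 w³ + k` on `U`. -/
theorem xxix_second_deriv_integral (U : Set ℂ) (hne : U.Nonempty)
    (hconn : IsConnected U) (hopen : IsOpen U) (w : ℂ → ℂ) (hw : AnalyticOnNhd ℂ w U)
    (heq : ∀ z ∈ U, 2 * w z * deriv (deriv w) z = (deriv w z) ^ 2 + 3 * w z ^ 4) :
    ∃ k : ℂ, ∀ z ∈ U, deriv (deriv w) z = 2 * w z ^ 3 + k := by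
  obtain ⟨z₀, hz₀⟩ := hne
  have heq_near := eventually_of_mem (hopen.mem_nhds hz₀) heq
  exact xxix_second_deriv_integral_general hconn.isPreconnected hz₀ hw
    (eventually_nhdsWithin_of_eventually_nhds heq_near).frequently
end

section
/- Let U ⊆ ℂ be a nonempty connected open set and let w : ℂ → ℂ be analytic on U and satisfy equation XXIX, namely 2·w(z)·w''(z) = (w'(z))² + 3·w(z)⁴ for all z ∈ U. Then there exists a constant K ∈ ℂ such that (w'(z))² = w(z)⁴ + K·w(z) for all z ∈ U. -/
/-!
For a solution `w` of equation XXIX, the function `F = (w')² - w⁴` satisfies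
`F w' - F' w = -w' (2 w w'' - (w')² - 3 w⁴) = 0`, so the Wronskian of `F` and `w` vanishes. Where
`w ≠ 0` this says that `F / w` is locally constant, and the identity theorem carries `F = K w` past
the zeros of `w`.
-/

open Filter Set
open scoped Topology

section Wronskian

variable {𝕜 : Type*}

/-- The Wronskian `f g' - f' g` of two functions of one variable, with the sign convention of
`Polynomial.wronskian`. -/
noncomputable def wronskian [NontriviallyNormedField 𝕜] (f g : 𝕜 → 𝕜) (z : 𝕜) : 𝕜 :=
  f z * deriv g z - deriv f z * g z

theorem analyticAt_wronskian [NontriviallyNormedField 𝕜] [CompleteSpace 𝕜] {f g : 𝕜 → 𝕜} {z : 𝕜}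
    (hf : AnalyticAt 𝕜 f z) (hg : AnalyticAt 𝕜 g z) : AnalyticAt 𝕜 (wronskian f g) z :=
  (hf.mul hg.deriv).sub (hf.deriv.mul hg)

theorem deriv_div_eq_neg_wronskian_div_sq [NontriviallyNormedField 𝕜] {f g : 𝕜 → 𝕜} {z : 𝕜}
    (hf : DifferentiableAt 𝕜 f z) (hg : DifferentiableAt 𝕜 g z) (hgz : g z ≠ 0) :
    deriv (f / g) z = -wronskian f g z / g z ^ 2 := by
  rw [deriv_div hf hg hgz, wronskian, neg_sub]

variable [RCLike 𝕜] {f g : 𝕜 → 𝕜} {z₀ : 𝕜} {U : Set 𝕜}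

theorem exists_eventuallyEq_const_mul_of_wronskian_eventuallyEq_zero
    (hf : ∀ᶠ z in 𝓝 z₀, DifferentiableAt 𝕜 f z) (hg : ∀ᶠ z in 𝓝 z₀, DifferentiableAt 𝕜 g z)
    (hgz₀ : g z₀ ≠ 0) (hfg : wronskian f g =ᶠ[𝓝 z₀] 0) :
    ∃ K : 𝕜, f =ᶠ[𝓝 z₀] fun z ↦ K * g z := by
  have hg_ne : ∀ᶠ z in 𝓝 z₀, g z ≠ 0 := hg.self_of_nhds.continuousAt.eventually_ne hgz₀
  obtain ⟨r, hr, hball⟩ :=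
    Metric.eventually_nhds_iff_ball.1 (hf.and (hg.and (hg_ne.and hfg)))
  have hdiff : DifferentiableOn 𝕜 (f / g) (Metric.ball z₀ r) := fun z hz ↦
    have ⟨hfz, hgz, hgz_ne, _⟩ := hball z hz
    (hfz.div hgz hgz_ne).differentiableWithinAt
  have hderiv : EqOn (deriv (f / g)) 0 (Metric.ball z₀ r) := fun z hz ↦ by
    obtain ⟨hfz, hgz, hgz_ne, hfgz⟩ := hball z hz
    rw [deriv_div_eq_neg_wronskian_div_sq hfz hgz hgz_ne, hfgz, Pi.zero_apply, neg_zero, zero_div]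
  obtain ⟨K, hK⟩ := Metric.isOpen_ball.exists_is_const_of_deriv_eq_zero
    Metric.isPreconnected_ball hdiff hderiv
  refine ⟨K, ?_⟩
  filter_upwards [Metric.ball_mem_nhds z₀ hr, hg_ne] with z hz hgz
  exact (div_eq_iff hgz).1 (hK z hz)

theorem exists_eqOn_const_mul_of_wronskian_eqOn_zero (hU : IsPreconnected U)
    (hf : AnalyticOnNhd 𝕜 f U) (hg : AnalyticOnNhd 𝕜 g U) (hz₀ : z₀ ∈ U) (hgz₀ : g z₀ ≠ 0)
    (hfg : EqOn (wronskian f g) 0 U) : ∃ K : 𝕜, EqOn f (fun z ↦ K * g z) U := by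
  rcases U.subsingleton_or_nontrivial with hsub | hnontriv
  · refine ⟨f z₀ / g z₀, fun z hz ↦ ?_⟩
    rw [hsub hz hz₀]
    exact (div_mul_cancel₀ _ hgz₀).symm
  · -- `U` accumulates at `z₀`, so the Wronskian vanishes on a whole neighbourhood of `z₀` in `𝕜`.
    have hfreq : ∃ᶠ z in 𝓝[≠] z₀, wronskian f g z = 0 :=
      (accPt_iff_frequently_nhdsNE.1 (hU.preperfect_of_nontrivial hnontriv z₀ hz₀)).mono
        fun _ hz ↦ hfg hz
    have hev : wronskian f g =ᶠ[𝓝 z₀] 0 :=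
      (analyticAt_wronskian (hf z₀ hz₀) (hg z₀ hz₀)).frequently_zero_iff_eventually_zero.1 hfreq
    obtain ⟨K, hK⟩ := exists_eventuallyEq_const_mul_of_wronskian_eventuallyEq_zero
      ((hf z₀ hz₀).eventually_analyticAt.mono fun _ h ↦ h.differentiableAt)
      ((hg z₀ hz₀).eventually_analyticAt.mono fun _ h ↦ h.differentiableAt) hgz₀ hev
    exact ⟨K, hf.eqOn_of_preconnected_of_eventuallyEq (analyticOnNhd_const.mul hg) hU hz₀ hK⟩

end Wronskian

theorem wronskian_deriv_sq_sub_pow_four_eq_zero {𝕜 : Type*} [NontriviallyNormedField 𝕜]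
    {w : 𝕜 → 𝕜} {z : 𝕜} (hw : DifferentiableAt 𝕜 w z) (hw' : DifferentiableAt 𝕜 (deriv w) z)
    (heq : 2 * w z * deriv (deriv w) z = deriv w z ^ 2 + 3 * w z ^ 4) :
    wronskian (fun z ↦ deriv w z ^ 2 - w z ^ 4) w z = 0 := by
  have hderiv : deriv (fun z ↦ deriv w z ^ 2 - w z ^ 4) z =
      2 * deriv w z * deriv (deriv w) z - 4 * w z ^ 3 * deriv w z := by
    simpa using ((hw'.hasDerivAt.fun_pow 2).fun_sub (hw.hasDerivAt.fun_pow 4)).deriv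
  rw [wronskian, hderiv]
  linear_combination -deriv w z * heq

theorem xxix_first_integral_general {𝕜 : Type*} [RCLike 𝕜] {U : Set 𝕜} (hU : IsPreconnected U)
    {w : 𝕜 → 𝕜} (hw : AnalyticOnNhd 𝕜 w U)
    (heq : ∀ z ∈ U, 2 * w z * deriv (deriv w) z = deriv w z ^ 2 + 3 * w z ^ 4) :
    ∃ K : 𝕜, ∀ z ∈ U, deriv w z ^ 2 = w z ^ 4 + K * w z := by
  by_cases hzero : ∀ z ∈ U, w z = 0
  · refine ⟨0, fun z hz ↦ ?_⟩
    linear_combination (2 * deriv (deriv w) z - 4 * w z ^ 3) * hzero z hz - heq z hz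
  push Not at hzero
  obtain ⟨z₀, hz₀, hwz₀⟩ := hzero
  obtain ⟨K, hK⟩ := exists_eqOn_const_mul_of_wronskian_eqOn_zero hU
    (AnalyticOnNhd.sub (hw.deriv.fun_pow 2) (hw.fun_pow 4)) hw hz₀ hwz₀ fun z hz ↦
      wronskian_deriv_sq_sub_pow_four_eq_zero (hw z hz).differentiableAt
        (hw z hz).deriv.differentiableAt (heq z hz)
  exact ⟨K, fun z hz ↦ sub_eq_iff_eq_add'.1 (hK hz)⟩

/-- If `w` is analytic on a nonempty connected open set `U ⊆ ℂ` and satisfies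
equation XXIX, `2 w w'' = (w')² + 3 w⁴`, on `U`, then there is a constant `K` with
`(w')² = w⁴ + K w` on `U`. -/
theorem xxix_first_integral (U : Set ℂ) (hne : U.Nonempty)
    (hconn : IsConnected U) (hopen : IsOpen U) (w : ℂ → ℂ) (hw : AnalyticOnNhd ℂ w U)
    (heq : ∀ z ∈ U, 2 * w z * deriv (deriv w) z = (deriv w z) ^ 2 + 3 * w z ^ 4) :
    ∃ K : ℂ, ∀ z ∈ U, (deriv w z) ^ 2 = w z ^ 4 + K * w z :=
  xxix_first_integral_general hconn.isPreconnected hw heq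
end
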